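/- Let X be a geodesic metric space with basepoint o, let G be a countable group acting on X by isometries containing two independent contracting isometries, and let μ be a non-elementary probability measure on G with L(μ) < ∞. Let η be a signed measure on G that is absolutely continuous with respect to μ (η(g) = 0 whenever μ(g) = 0) with ‖η‖_{0,1} < ∞, and let (μ_t)_{t∈[−1,1]} be a family of probability measures on G with ‖μ_t − μ − tη‖_{0,1} = o(t) as t → 0. Then: (a) the limit D := lim_{n→∞} (1/n) ∑_{i=1}^{n} ∑_{g∈G} (μ^{*(i−1)} * η * μ^{*(n−i)})(g) · d(o, g·o) exists, and (b) the function t ↦ l(μ_t) is differentiable at t = 0 with derivative equal to D. -/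

import Mathlib

open Filter Topology Pointwise

/-- `f` parametrizes a geodesic from `x` to `y` by arclength on `[0, dist x y]`. -/
def IsGeodesicSegment {X : Type*} [MetricSpace X] (f : ℝ → X) (x y : X) : Prop :=
  f 0 = x ∧ f (dist x y) = y ∧
    ∀ s ∈ Set.Icc (0 : ℝ) (dist x y), ∀ t ∈ Set.Icc (0 : ℝ) (dist x y),
      dist (f s) (f t) = |s - t|

/-- `X` is a geodesic metric space: any two points are joined by a geodesic. -/
def IsGeodesicSpace (X : Type*) [MetricSpace X] : Prop :=
  ∀ x y : X, ∃ f : ℝ → X, IsGeodesicSegment f x y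

/-- Nearest-point projection of `x` to the set `A`. -/
def projSet {X : Type*} [MetricSpace X] (A : Set X) (x : X) : Set X :=
  {a ∈ A | dist x a = Metric.infDist x A}

/-- Nearest-point projection of the set `B` to the set `A`. -/
def projSetOf {X : Type*} [MetricSpace X] (A B : Set X) : Set X :=
  ⋃ x ∈ B, projSet A x

/-- A `K`-quasigeodesic indexed by `ℤ`. -/
def IsQuasigeodesicZ {X : Type*} [MetricSpace X] (K : ℝ) (γ : ℤ → X) : Prop :=
  ∀ s t : ℤ, |(s : ℝ) - (t : ℝ)| / K - K ≤ dist (γ s) (γ t) ∧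
    dist (γ s) (γ t) ≤ K * |(s : ℝ) - (t : ℝ)| + K

/-- A `K`-contracting axis indexed by `ℤ`: a `K`-quasigeodesic such that every geodesic
staying `K`-far from it has nearest-point projection of diameter `< K`. -/
def IsContractingAxisZ {X : Type*} [MetricSpace X] (K : ℝ) (γ : ℤ → X) : Prop :=
  IsQuasigeodesicZ K γ ∧
    ∀ (f : ℝ → X) (x y : X), IsGeodesicSegment f x y →
      (∀ t ∈ Set.Icc (0 : ℝ) (dist x y), K ≤ Metric.infDist (f t) (Set.range γ)) →
      EMetric.diam (projSetOf (Set.range γ) (f '' Set.Icc (0 : ℝ) (dist x y)))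
        < ENNReal.ofReal K

/-- The `ℤ`-orbit of the basepoint `o` under powers of `g`. -/
def zorbit {G X : Type*} [Group G] [MetricSpace X] [MulAction G X] (o : X) (g : G) : Set X :=
  Set.range fun i : ℤ => g ^ i • o

/-- `g` is a contracting isometry: its orbit map `i ↦ g^i • o` is a `K`-contracting axis
for some `K > 1`. -/
def IsContractingIsom {G X : Type*} [Group G] [MetricSpace X] [MulAction G X]
    (o : X) (g : G) : Prop :=
  ∃ K : ℝ, 1 < K ∧ IsContractingAxisZ K fun i : ℤ => g ^ i • o

/-- `g` and `h` are independent contracting isometries: both are contracting, and the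
nearest-point projections of each orbit to the other are bounded. -/
def IndependentPair {G X : Type*} [Group G] [MetricSpace X] [MulAction G X]
    (o : X) (g h : G) : Prop :=
  IsContractingIsom o g ∧ IsContractingIsom o h ∧
    Bornology.IsBounded (projSetOf (zorbit o g) (zorbit o h)) ∧
    Bornology.IsBounded (projSetOf (zorbit o h) (zorbit o g))

/-- `G` contains two independent contracting isometries of `X`. -/
def HasIndepContracting (G : Type*) {X : Type*} [Group G] [MetricSpace X] [MulAction G X]
    (o : X) : Prop :=
  ∃ g h : G, IndependentPair o g h

/-- `μ` is a probability measure on the countable group `G`. -/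
def IsProbMeasure {G : Type*} (μ : G → ℝ) : Prop :=
  (∀ g, 0 ≤ μ g) ∧ Summable μ ∧ ∑' g, μ g = 1

/-- Convolution of two (signed) measures on `G`. -/
noncomputable def conv {G : Type*} [Group G] (μ ν : G → ℝ) : G → ℝ :=
  fun g => ∑' h : G, μ h * ν (h⁻¹ * g)

/-- `n`-fold convolution power of `μ`, with `convPow μ 0` the point mass at the identity. -/
noncomputable def convPow {G : Type*} [Group G] (μ : G → ℝ) : ℕ → G → ℝ
  | 0 => ({1} : Set G).indicator fun _ => (1 : ℝ)
  | n + 1 => conv μ (convPow μ n)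

/-- First moment `L(μ) = ∑_g μ(g) d(o, g o)`. -/
noncomputable def firstMoment {G X : Type*} [Group G] [MetricSpace X] [MulAction G X]
    (o : X) (μ : G → ℝ) : ℝ :=
  ∑' g : G, μ g * dist o (g • o)

/-- `μ` has finite first moment. -/
def HasFiniteFirstMoment {G X : Type*} [Group G] [MetricSpace X] [MulAction G X]
    (o : X) (μ : G → ℝ) : Prop :=
  Summable fun g : G => μ g * dist o (g • o)

/-- The escape rate `l(μ) = lim_n L(μ^{*n})/n`; by subadditivity of `n ↦ L(μ^{*n})`
(Fekete), the limit equals the infimum. -/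
noncomputable def escapeRate {G X : Type*} [Group G] [MetricSpace X] [MulAction G X]
    (o : X) (μ : G → ℝ) : ℝ :=
  ⨅ n : ℕ, firstMoment o (convPow μ (n + 1)) / (n + 1 : ℝ)

/-- `μ` is non-elementary: the sub-semigroup generated by its support contains
two independent contracting isometries. -/
def NonElementary {G X : Type*} [Group G] [MetricSpace X] [MulAction G X]
    (o : X) (μ : G → ℝ) : Prop :=
  ∃ g h : G, g ∈ Subsemigroup.closure {x : G | 0 < μ x} ∧
    h ∈ Subsemigroup.closure {x : G | 0 < μ x} ∧ IndependentPair o g h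

/-- The norm `‖η‖₀ + ‖η‖₁ = ∑_g (1 + d(o, g o))|η(g)|`, valued in `ℝ≥0∞` so that
finiteness is recorded. -/
noncomputable def enorm01 {G X : Type*} [Group G] [MetricSpace X] [MulAction G X]
    (o : X) (η : G → ℝ) : ENNReal :=
  ∑' g : G, ENNReal.ofReal ((1 + dist o (g • o)) * |η g|)

/-- `‖F t‖_{0,1} = o(t)` as `t → 0`. -/
def IsLittleO01 {G X : Type*} [Group G] [MetricSpace X] [MulAction G X]
    (o : X) (F : ℝ → G → ℝ) : Prop :=
  ∀ ε : ℝ, 0 < ε → ∃ δ : ℝ, 0 < δ ∧ ∀ t : ℝ, |t| < δ →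
    enorm01 o (F t) ≤ ENNReal.ofReal (ε * |t|)

/-!
A contracting axis gives a coarse coordinate `β` on `X`, and two independent contracting elements
give ping-pong letters `sᵢ`, charged by a power of `μ`, which send the complement of a source
interval of `β` to a target interval. If a word is short compared with the Gromov product of `y`
with its endpoint, the coordinate of `y` seen from that word is determined, so all such words
together see `y` in the target of at most one letter. The other letters require `y` to lie near
their sources, which are disjoint; measured in `ℓ²`, this makes the probability of such words
decay exponentially, at a rate depending only on the weights of the `sᵢ`. Hence a single constant
`C` bounds the expected defect `‖x‖ + ‖g‖ - ‖x g‖`, for `g` distributed according to any power of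
any probability measure `κ` near `μ`. It follows that `|L(κ^n) - n l(κ)| ≤ C` and that `l` is
Lipschitz near `μ`.

If `η = f μ` with `f` bounded, the first-order term of `t ↦ L((μ + t η)^n)` is `n t` times the
`n`-th term of the sequence defining `D`. The remainder is `t ^ 2` times a sum of `n` terms, each
of which pairs a bounded function with a sum of centred increments `f(gᵢ)` and is therefore
`O(√n)` by orthogonality of martingale increments. Dividing by `n t`, the difference quotient of
`l` is within `O(1 / (n t) + t √n)` of the `n`-th term, and one takes `n ∼ 1 / (ε t)`. A general
`η` is approximated by directions of bounded density; the Lipschitz bound controls this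
approximation and the passage from `μ + t η` to `μ_t`.
-/

section GromovProduct

variable {X : Type*} [MetricSpace X]

/-- The Gromov product of `p` and `q` based at `o`. -/
noncomputable def gromovProduct (o p q : X) : ℝ :=
  (dist o p + dist o q - dist p q) / 2

lemma gromovProduct_comm (o p q : X) : gromovProduct o p q = gromovProduct o q p := by
  simp only [gromovProduct, dist_comm p q, add_comm (dist o p)]

lemma gromovProduct_le_add_dist (o o' p q : X) :
    gromovProduct o p q ≤ gromovProduct o' p q + dist o o' := by
  have hp := dist_triangle o o' p
  have hq := dist_triangle o o' q
  simp only [gromovProduct]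
  linarith

lemma gromovProduct_eq_zero {m p q : X} (h : dist p q = dist p m + dist m q) :
    gromovProduct m p q = 0 := by
  simp [gromovProduct, h, dist_comm m p]

lemma gromovProduct_smul {G : Type*} [Group G] [MulAction G X] [IsIsometricSMul G X]
    (g : G) (o p q : X) :
    gromovProduct (g • o) (g • p) (g • q) = gromovProduct o p q := by
  simp [gromovProduct]

end GromovProduct

lemma exists_first_hitting_time {φ : ℝ → ℝ} {K T : ℝ} (hφ : ContinuousOn φ (Set.Icc 0 T))
    (h0 : K ≤ φ 0) (hit : ∃ t ∈ Set.Icc 0 T, φ t ≤ K) :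
    ∃ t₁ ∈ Set.Icc 0 T, φ t₁ = K ∧ ∀ t ∈ Set.Icc 0 t₁, K ≤ φ t := by
  have ivt {t : ℝ} (ht : t ∈ Set.Icc 0 T) (hle : φ t ≤ K) : ∃ s ∈ Set.Icc 0 t, φ s = K :=
    intermediate_value_Icc' ht.1 (hφ.mono (Set.Icc_subset_Icc_right ht.2)) ⟨hle, h0⟩
  obtain ⟨t, ht, htK⟩ := hit
  obtain ⟨s, hs, hsK⟩ := ivt ht htK
  have hcompact : IsCompact (Set.Icc 0 T ∩ φ ⁻¹' {K}) :=
    isCompact_Icc.of_isClosed_subset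
      (hφ.preimage_isClosed_of_isClosed isClosed_Icc isClosed_singleton) Set.inter_subset_left
  obtain ⟨t₁, ⟨ht₁, hφt₁⟩, hleast⟩ :=
    hcompact.exists_isLeast ⟨s, ⟨hs.1, hs.2.trans ht.2⟩, hsK⟩
  refine ⟨t₁, ht₁, hφt₁, fun u hu => ?_⟩
  by_contra! hlt
  obtain ⟨v, hv, hvK⟩ := ivt ⟨hu.1, hu.2.trans ht₁.2⟩ hlt.le
  have huv : u = v :=
    le_antisymm (hu.2.trans (hleast ⟨⟨hv.1, by linarith [hv.2, hu.2, ht₁.2]⟩, hvK⟩)) hv.2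
  exact hlt.ne (huv ▸ hvK)

namespace IsGeodesicSegment

variable {X : Type*} [MetricSpace X] {f : ℝ → X} {x y : X} {t : ℝ}

lemma dist_left (hf : IsGeodesicSegment f x y) (ht : t ∈ Set.Icc 0 (dist x y)) :
    dist x (f t) = t := by
  simpa [hf.1, abs_of_nonneg ht.1] using hf.2.2 0 ⟨le_rfl, dist_nonneg⟩ t ht

lemma dist_right (hf : IsGeodesicSegment f x y) (ht : t ∈ Set.Icc 0 (dist x y)) :
    dist (f t) y = dist x y - t := by
  simpa [hf.2.1, abs_sub_comm t, abs_of_nonneg (sub_nonneg.2 ht.2)] using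
    hf.2.2 t ht (dist x y) ⟨dist_nonneg, le_rfl⟩

lemma initial (hf : IsGeodesicSegment f x y) (ht : t ∈ Set.Icc 0 (dist x y)) :
    IsGeodesicSegment f x (f t) := by
  refine ⟨hf.1, by rw [hf.dist_left ht], ?_⟩
  rw [hf.dist_left ht]
  have hsub : Set.Icc 0 t ⊆ Set.Icc 0 (dist x y) := Set.Icc_subset_Icc_right ht.2
  exact fun s hs u hu => hf.2.2 s (hsub hs) u (hsub hu)

lemma continuousOn (hf : IsGeodesicSegment f x y) : ContinuousOn f (Set.Icc 0 (dist x y)) := by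
  refine LipschitzOnWith.continuousOn (K := 1) (LipschitzOnWith.of_dist_le_mul fun s hs u hu => ?_)
  rw [hf.2.2 s hs u hu, Real.dist_eq, NNReal.coe_one, one_mul]

end IsGeodesicSegment

lemma isGeodesicSegment_const {X : Type*} [MetricSpace X] (x : X) :
    IsGeodesicSegment (fun _ => x) x x := by
  refine ⟨rfl, rfl, fun s hs t ht => ?_⟩
  simp_all

section NearestIndex

variable {X : Type*} [MetricSpace X] {K : ℝ} {γ : ℤ → X} {x y z : X} {i j : ℤ}

/-- `γ i` realizes the distance from `x` to the image of `γ`; this is the index form of the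
nearest-point projection. -/
def IsNearestIndex (γ : ℤ → X) (x : X) (i : ℤ) : Prop :=
  ∀ j, dist x (γ i) ≤ dist x (γ j)

lemma IsNearestIndex.dist_eq_infDist (h : IsNearestIndex γ x i) :
    dist x (γ i) = Metric.infDist x (Set.range γ) :=
  le_antisymm
    ((Metric.le_infDist (Set.range_nonempty γ)).2 (Set.forall_mem_range.2 h))
    (Metric.infDist_le_dist_of_mem (Set.mem_range_self i))

lemma IsNearestIndex.mem_projSet (h : IsNearestIndex γ x i) : γ i ∈ projSet (Set.range γ) x :=
  ⟨Set.mem_range_self i, h.dist_eq_infDist⟩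

namespace IsQuasigeodesicZ

lemma abs_sub_le (hK : 0 < K) (hγ : IsQuasigeodesicZ K γ) {r : ℝ}
    (h : dist (γ i) (γ j) ≤ r) : |(i : ℝ) - j| ≤ K * (r + K) := by
  have hdiv : |(i : ℝ) - j| / K ≤ r + K := by linarith [(hγ i j).1]
  rwa [div_le_iff₀' hK] at hdiv

lemma exists_isNearestIndex (hK : 0 < K) (hγ : IsQuasigeodesicZ K γ) (x : X) :
    ∃ i, IsNearestIndex γ x i := by
  refine Tendsto.exists_forall_le (f := fun i => dist x (γ i)) ?_
  have hnorm : Tendsto (fun i : ℤ => |(i : ℝ)|) cofinite atTop := by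
    simpa only [← cocompact_eq_cofinite, ← Int.norm_eq_abs] using tendsto_norm_cocompact_atTop
  refine tendsto_atTop_mono (fun i => ?_)
    (tendsto_atTop_add_const_right _ (-(K + dist x (γ 0))) (hnorm.atTop_div_const hK))
  have hquasi := (hγ i 0).1
  have htri := dist_triangle_left (γ i) (γ 0) x
  rw [Int.cast_zero, sub_zero] at hquasi
  linarith

end IsQuasigeodesicZ

namespace IsContractingAxisZ

lemma dist_lt_of_far (hγ : IsContractingAxisZ K γ) {f : ℝ → X} (hf : IsGeodesicSegment f x y)
    (hfar : ∀ t ∈ Set.Icc (0 : ℝ) (dist x y), K ≤ Metric.infDist (f t) (Set.range γ))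
    (hi : IsNearestIndex γ x i) (hj : IsNearestIndex γ y j) : dist (γ i) (γ j) < K := by
  have hx : x ∈ f '' Set.Icc 0 (dist x y) := ⟨0, ⟨le_rfl, dist_nonneg⟩, hf.1⟩
  have hy : y ∈ f '' Set.Icc 0 (dist x y) := ⟨dist x y, ⟨dist_nonneg, le_rfl⟩, hf.2.1⟩
  have hediam := (Metric.edist_le_ediam_of_mem (Set.mem_biUnion hx hi.mem_projSet)
    (Set.mem_biUnion hy hj.mem_projSet)).trans_lt (hγ.2 f x y hf hfar)
  rw [edist_dist] at hediam
  exact (ENNReal.ofReal_lt_ofReal_iff_of_nonneg dist_nonneg).1 hediam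

lemma dist_nearest_le (hK : 0 < K) (hγ : IsContractingAxisZ K γ)
    (hi : IsNearestIndex γ x i) (hj : IsNearestIndex γ x j) : dist (γ i) (γ j) ≤ 2 * K := by
  by_cases hfar : K ≤ Metric.infDist x (Set.range γ)
  · linarith [hγ.dist_lt_of_far (isGeodesicSegment_const x) (fun _ _ => hfar) hi hj]
  · linarith [dist_triangle_left (γ i) (γ j) x, hi.dist_eq_infDist, hj.dist_eq_infDist]

lemma exists_between_near_projection (hgeo : IsGeodesicSpace X) (hK : 1 < K)
    (hγ : IsContractingAxisZ K γ) (hi : IsNearestIndex γ y i) (hj : IsNearestIndex γ z j)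
    (hij : 2 * K ^ 2 < |(i : ℝ) - j|) :
    ∃ m : X, dist y z = dist y m + dist m z ∧ dist m (γ i) ≤ 2 * K := by
  have hK0 : 0 < K := by linarith
  obtain ⟨f, hf⟩ := hgeo y z
  by_cases hnear : Metric.infDist y (Set.range γ) ≤ K
  · exact ⟨y, by simp, by linarith [hi.dist_eq_infDist]⟩
  have hφ : ContinuousOn (fun t => Metric.infDist (f t) (Set.range γ)) (Set.Icc 0 (dist y z)) :=
    (Metric.continuous_infDist_pt _).comp_continuousOn hf.continuousOn
  have hit : ∃ t ∈ Set.Icc 0 (dist y z), Metric.infDist (f t) (Set.range γ) ≤ K := by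
    by_contra! hfar
    have hclose := hγ.1.abs_sub_le hK0
      (hγ.dist_lt_of_far hf (fun t ht => (hfar t ht).le) hi hj).le
    nlinarith
  obtain ⟨t, ht, htK, hfar⟩ := exists_first_hitting_time hφ (by rw [hf.1]; linarith) hit
  obtain ⟨k, hk⟩ := hγ.1.exists_isNearestIndex hK0 (f t)
  have hproj : dist (γ i) (γ k) < K :=
    hγ.dist_lt_of_far (hf.initial ht) (by rwa [hf.dist_left ht]) hi hk
  refine ⟨f t, by rw [hf.dist_left ht, hf.dist_right ht]; ring, ?_⟩
  linarith [dist_triangle_right (f t) (γ i) (γ k), hk.dist_eq_infDist]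

lemma gromovProduct_le (hgeo : IsGeodesicSpace X) (hK : 1 < K) (hγ : IsContractingAxisZ K γ)
    {W : ℝ} (hi : IsNearestIndex γ y i) (hj : IsNearestIndex γ z j) (hW : |(i : ℝ)| ≤ W)
    (hij : 2 * K ^ 2 < |(i : ℝ) - j|) : gromovProduct (γ 0) y z ≤ 3 * K + K * W := by
  obtain ⟨m, hm, hmi⟩ := hγ.exists_between_near_projection hgeo hK hi hj hij
  have hbase := gromovProduct_le_add_dist (γ 0) m y z
  have hzero := gromovProduct_eq_zero hm
  have htri := dist_triangle_right (γ 0) m (γ i)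
  have hquasi := (hγ.1 0 i).2
  rw [Int.cast_zero, zero_sub, abs_neg] at hquasi
  have hKW : K * |(i : ℝ)| ≤ K * W := by gcongr
  linarith

end IsContractingAxisZ

end NearestIndex

section Coordinate

variable {G X : Type*} [Group G] [MetricSpace X] [MulAction G X] {o : X} {a b : G}

lemma IsNearestIndex.zpow_smul [IsIsometricSMul G X] {x : X} {i : ℤ}
    (h : IsNearestIndex (fun i : ℤ => b ^ i • o) x i) (n : ℤ) :
    IsNearestIndex (fun i : ℤ => b ^ i • o) (b ^ n • x) (n + i) := by
  intro j
  have hshift (k : ℤ) : dist (b ^ n • x) (b ^ (n + k) • o) = dist x (b ^ k • o) := by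
    rw [zpow_add, mul_smul, dist_smul]
  have hj := hshift (j - n)
  rw [add_sub_cancel] at hj
  simpa only [hshift, hj] using h (j - n)

lemma IsContractingAxisZ.abs_index_zpow_smul_le [IsIsometricSMul G X] {K : ℝ} (hK : 0 < K)
    (hb : IsContractingAxisZ K fun i : ℤ => b ^ i • o) {x : X} {i j n : ℤ}
    (hi : IsNearestIndex (fun i : ℤ => b ^ i • o) (b ^ n • x) i)
    (hj : IsNearestIndex (fun i : ℤ => b ^ i • o) x j) :
    |(i : ℝ) - j - n| ≤ K * (2 * K + K) := by
  have h := hb.1.abs_sub_le hK (hb.dist_nearest_le hK hi (hj.zpow_smul n))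
  push_cast at h
  rwa [sub_sub, add_comm (j : ℝ)]

lemma exists_abs_index_le_of_isBounded_projSetOf (hgeo : IsGeodesicSpace X)
    {Ka Kb : ℝ} (hKa : 0 < Ka) (hKb : 1 < Kb)
    (ha : IsQuasigeodesicZ Ka fun i : ℤ => a ^ i • o)
    (hb : IsContractingAxisZ Kb fun i : ℤ => b ^ i • o)
    (hproj : Bornology.IsBounded (projSetOf (zorbit o b) (zorbit o a))) :
    ∃ c c' : ℝ, ∀ (x : X) (i j : ℤ), IsNearestIndex (fun i : ℤ => b ^ i • o) x i →
      IsNearestIndex (fun i : ℤ => a ^ i • o) x j → c < |(i : ℝ)| → |(j : ℝ)| ≤ c' := by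
  have hKb0 : 0 < Kb := by linarith
  obtain ⟨r, hr⟩ := hproj.subset_closedBall o
  set W := Kb * (r + Kb)
  have hindex (k j : ℤ) (h : IsNearestIndex (fun i : ℤ => b ^ i • o) (a ^ j • o) k) :
      |(k : ℝ)| ≤ W := by
    have hmem : b ^ k • o ∈ projSetOf (zorbit o b) (zorbit o a) :=
      Set.mem_biUnion (x := a ^ j • o) ⟨j, rfl⟩ h.mem_projSet
    have hdist : dist (b ^ k • o) o ≤ r := hr hmem
    simpa using hb.1.abs_sub_le (i := k) (j := 0) hKb0 (r := r) (by simpa using hdist)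
  refine ⟨W + 2 * Kb ^ 2, Ka * (2 * (3 * Kb + Kb * W) + Ka), fun x i j hi hj hlt => ?_⟩
  obtain ⟨k, hk⟩ := hb.1.exists_isNearestIndex hKb0 (a ^ j • o)
  have hki : 2 * Kb ^ 2 < |(k : ℝ) - i| := by
    have := abs_sub_abs_le_abs_sub (i : ℝ) k
    rw [abs_sub_comm] at this
    linarith [hindex k j hk]
  have hgp := hb.gromovProduct_le hgeo hKb hk hi (hindex k j hk) hki
  have hnear := hj 0
  simp only [zpow_zero, one_smul, gromovProduct] at hgp hnear
  rw [dist_comm (a ^ j • o) x, dist_comm o x, dist_comm o] at hgp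
  have hdist : dist (a ^ j • o) o ≤ 2 * (3 * Kb + Kb * W) := by linarith
  simpa using ha.abs_sub_le (i := j) (j := 0) hKa (by simpa using hdist)

/-- `β` is continuous at infinity up to the error `E`: points with a large Gromov product have
`E`-close values of `β`, as long as one of these values stays in a fixed window. -/
def IsCoarselyContinuous {X : Type*} [MetricSpace X] (o : X) (E : ℝ) (β : X → ℝ) : Prop :=
  ∀ W : ℝ, ∃ A : ℝ, ∀ y z : X, A < gromovProduct o y z → |β y| ≤ W → |β y - β z| ≤ E

lemma IndependentPair.exists_coordinate [IsIsometricSMul G X] (hgeo : IsGeodesicSpace X)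
    (hab : IndependentPair o a b) :
    ∃ (β : X → ℝ) (E c : ℝ) (L : ℕ), IsCoarselyContinuous o E β ∧
      (∀ (n : ℤ) (x : X), |β (b ^ n • x) - β x - n| ≤ E) ∧
      ∀ x : X, c < |β x| → |β ((a ^ L)⁻¹ • x)| ≤ c := by
  obtain ⟨⟨Ka, hKa, ha⟩, ⟨Kb, hKb, hb⟩, hpa, hpb⟩ := hab
  have hKa0 : 0 < Ka := by linarith
  have hKb0 : 0 < Kb := by linarith
  choose α hα using ha.1.exists_isNearestIndex hKa0
  choose β hβ using hb.1.exists_isNearestIndex hKb0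
  obtain ⟨c₁, c₁', hβα⟩ := exists_abs_index_le_of_isBounded_projSetOf hgeo hKa0 hKb ha.1 hb hpb
  obtain ⟨c₂, c₂', hαβ⟩ := exists_abs_index_le_of_isBounded_projSetOf hgeo hKb0 hKa hb.1 ha hpa
  obtain ⟨L, hL⟩ := exists_nat_gt (c₂ + c₁' + Ka * (2 * Ka + Ka))
  refine ⟨fun x => β x, Kb * (2 * Kb + Kb), max c₁ c₂', L, fun W => ?_, fun n x => ?_,
    fun x hx => ?_⟩
  · refine ⟨3 * Kb + Kb * W, fun y z hlt hW => ?_⟩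
    by_contra! hfar
    have hgp := hb.gromovProduct_le hgeo hKb (hβ y) (hβ z) hW (by nlinarith)
    simp only [zpow_zero, one_smul] at hgp
    linarith
  · exact hb.abs_index_zpow_smul_le hKb0 (hβ _) (hβ x)
  · have hαx := hβα x _ _ (hβ x) (hα x) ((le_max_left _ _).trans_lt hx)
    have hshift := ha.abs_index_zpow_smul_le hKa0 (hα (a ^ (-L : ℤ) • x)) (hα x)
    rw [← zpow_natCast, ← zpow_neg]
    refine le_max_of_le_right (hαβ _ _ _ (hα _) (hβ _) (lt_abs.2 (Or.inr ?_)))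
    push_cast at hshift
    linarith [(abs_le.1 hshift).2, (abs_le.1 hαx).2]

end Coordinate

section PingPong

variable {Λ G X : Type*} [Group G] [MulAction G X]

/-- Ping-pong for a finite family of letters `s`, read off a coordinate `β : X → ℝ`: the inverse
of `s i` sends every point outside the source interval `[p i - r, p i + r]` into the target
interval `[q i - r, q i + r]`. Distinct sources are disjoint, and distinct targets are more
than `δ` apart. -/
structure IsPingPong (β : X → ℝ) (s : Λ → G) (p q : Λ → ℝ) (r δ : ℝ) : Prop where
  maps_to_target : ∀ i x, r < |β x - p i| → |β ((s i)⁻¹ • x) - q i| ≤ r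
  sources_separated : ∀ i j, i ≠ j → 2 * r < |p i - p j|
  targets_separated : ∀ i j, i ≠ j → 2 * r + δ < |q i - q j|

lemma lt_abs_mul_sub_mul {n : ℕ} {d : ℝ} {k : ℕ} (hk : d < k) {i j : Fin n} (hij : i ≠ j) :
    d < |(k : ℝ) * (i : ℕ) - k * (j : ℕ)| := by
  have hint : (1 : ℤ) ≤ |((i : ℕ) : ℤ) - (j : ℕ)| :=
    Int.one_le_abs (sub_ne_zero.2 fun h => hij (Fin.ext (by exact_mod_cast h)))
  have hone : (1 : ℝ) ≤ |((i : ℕ) : ℝ) - (j : ℕ)| := by exact_mod_cast hint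
  rw [← mul_sub, abs_mul, Nat.abs_cast]
  exact hk.trans_le (le_mul_of_one_le_right k.cast_nonneg hone)

lemma isPingPong_letters {a b : G} {β : X → ℝ} {E c δ : ℝ} {L k N : ℕ}
    (hshift : ∀ (n : ℤ) (x : X), |β (b ^ n • x) - β x - n| ≤ E)
    (hturn : ∀ x : X, c < |β x| → |β ((a ^ L)⁻¹ • x)| ≤ c)
    (hδ : 0 ≤ δ) (hk : 2 * (c + E) + δ < k) :
    IsPingPong β (fun i : Fin N => b ^ (k * i : ℕ) * a ^ L * b ^ (k * i.rev : ℕ))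
      (fun i => k * (i : ℕ)) (fun i => -(k * (i.rev : ℕ))) (c + E) δ where
  maps_to_target i x hx := by
    have hback (m : ℕ) (x : X) : |β ((b ^ m)⁻¹ • x) - β x + m| ≤ E := by
      simpa using hshift (-m) x
    have hfirst := hback (k * i) x
    set x₁ := (b ^ (k * i : ℕ))⁻¹ • x
    set x₂ := (a ^ L)⁻¹ • x₁
    push_cast at hfirst
    have hmiddle : |β x₂| ≤ c := by
      refine hturn x₁ ?_
      have htri := abs_sub_abs_le_abs_sub (β x - k * (i : ℕ)) (β x₁)
      rw [abs_sub_comm _ (β x₁), ← sub_add] at htri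
      linarith
    have hlast := hback (k * i.rev) x₂
    rw [mul_inv_rev, mul_inv_rev, mul_smul, mul_smul]
    push_cast at hlast
    rw [abs_le] at hmiddle hlast ⊢
    constructor <;> linarith
  sources_separated i j hij := lt_abs_mul_sub_mul (by linarith) hij
  targets_separated i j hij := by
    rw [neg_sub_neg]
    exact lt_abs_mul_sub_mul hk (Fin.rev_injective.ne hij.symm)

end PingPong

section IteratedExpectation

variable {G : Type*} {κ : G → ENNReal} {n : ℕ}

/-- The iterated sum `∑ κ g₁ ⋯ κ gₙ F [gₙ, …, g₁]`: the expectation of `F` along `n` independent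
steps of law `κ`. The head of the list is the last step. -/
noncomputable def iterExp (κ : G → ENNReal) : ℕ → (List G → ENNReal) → ENNReal
  | 0, F => F []
  | n + 1, F => ∑' g, κ g * iterExp κ n fun l => F (g :: l)

lemma iterExp_mono {F F' : List G → ENNReal} (h : ∀ l, F l ≤ F' l) :
    iterExp κ n F ≤ iterExp κ n F' := by
  induction n generalizing F F' with
  | zero => exact h []
  | succ n ih => exact ENNReal.tsum_le_tsum fun g => mul_le_mul_right (ih fun l => h _) _

lemma iterExp_add (F F' : List G → ENNReal) :
    iterExp κ n (fun l => F l + F' l) = iterExp κ n F + iterExp κ n F' := by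
  induction n generalizing F F' with
  | zero => rfl
  | succ n ih => simp only [iterExp, ih, mul_add, ENNReal.tsum_add]

lemma iterExp_const_mul (c : ENNReal) (F : List G → ENNReal) :
    iterExp κ n (fun l => c * F l) = c * iterExp κ n F := by
  induction n generalizing F with
  | zero => rfl
  | succ n ih => simp only [iterExp, ih, ← ENNReal.tsum_mul_left, mul_left_comm c]

lemma iterExp_tsum {ι : Type*} (F : ι → List G → ENNReal) :
    iterExp κ n (fun l => ∑' i, F i l) = ∑' i, iterExp κ n (F i) := by
  induction n generalizing F with
  | zero => rfl
  | succ n ih =>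
    simp only [iterExp, ih, ← ENNReal.tsum_mul_left]
    exact ENNReal.tsum_comm

lemma iterExp_sum {ι : Type*} [Fintype ι] (F : ι → List G → ENNReal) :
    iterExp κ n (fun l => ∑ i, F i l) = ∑ i, iterExp κ n (F i) := by
  simpa only [tsum_fintype] using iterExp_tsum F

end IteratedExpectation

section Words

variable {G X : Type*} [Group G] [MetricSpace X] [MulAction G X]

/-- The displacement `‖g‖ = d(o, g o)` of the basepoint. -/
noncomputable def displacement (o : X) (g : G) : ℝ := dist o (g • o)

@[simp]
lemma displacement_one (o : X) : displacement o (1 : G) = 0 := by simp [displacement]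

lemma displacement_nonneg (o : X) (g : G) : 0 ≤ displacement o g := dist_nonneg

lemma displacement_mul_le [IsIsometricSMul G X] (o : X) (g h : G) :
    displacement o (g * h) ≤ displacement o g + displacement o h := by
  simpa [displacement, mul_smul] using dist_triangle o (g • o) (g • h • o)

@[simp]
lemma displacement_inv [IsIsometricSMul G X] (o : X) (g : G) :
    displacement o g⁻¹ = displacement o g := by
  rw [displacement, ← dist_smul g, smul_inv_smul, dist_comm, displacement]

/-- The product of a word of steps whose head is the last step. -/
def wordProd (l : List G) : G := l.reverse.prod

@[simp]
lemma wordProd_nil : wordProd ([] : List G) = 1 := rfl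

@[simp]
lemma wordProd_cons (g : G) (l : List G) : wordProd (g :: l) = wordProd l * g := by
  simp [wordProd]

/-- The total length `∑ d(o, g o)` of a word of steps. -/
noncomputable def wordLength (o : X) (l : List G) : ℝ := (l.map (displacement o)).sum

@[simp]
lemma wordLength_nil (o : X) : wordLength o ([] : List G) = 0 := rfl

@[simp]
lemma wordLength_cons (o : X) (g : G) (l : List G) :
    wordLength o (g :: l) = displacement o g + wordLength o l := by
  simp [wordLength]

lemma wordLength_nonneg (o : X) (l : List G) : 0 ≤ wordLength o l :=
  List.sum_nonneg (by simp [displacement_nonneg])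

lemma displacement_wordProd_le [IsIsometricSMul G X] (o : X) (l : List G) :
    displacement o (wordProd l) ≤ wordLength o l := by
  induction l with
  | nil => simp
  | cons g l ih =>
    rw [wordProd_cons, wordLength_cons]
    linarith [displacement_mul_le o (wordProd l) g]

end Words

section Coherence

variable {G X : Type*} [Group G] [MetricSpace X] [MulAction G X]
  {o : X} {β : X → ℝ} {W δ : ℝ} {y : X} {B : Set (List G)}

/-- A set of words is coherent if the coordinate of `y`, seen from the endpoints of its words,
agrees up to `δ` between all of them as soon as it lies in the window `[-W, W]`. The auxiliary
element `h` makes the notion stable under removal of the last step of the words. -/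
def IsCoherent (o : X) (β : X → ℝ) (W δ : ℝ) (y : X) (B : Set (List G)) : Prop :=
  ∀ l ∈ B, ∀ l' ∈ B, ∀ h : G, displacement o h ≤ wordLength o l →
    displacement o h ≤ wordLength o l' → |β (h⁻¹ • (wordProd l)⁻¹ • y)| ≤ W →
    |β (h⁻¹ • (wordProd l)⁻¹ • y) - β (h⁻¹ • (wordProd l')⁻¹ • y)| ≤ δ

lemma IsCoherent.preimage_cons [IsIsometricSMul G X] (hB : IsCoherent o β W δ y B) (g : G) :
    IsCoherent o β W δ y (List.cons g ⁻¹' B) := by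
  intro l hl l' hl' h hhl hhl' hW
  have hcancel (l : List G) :
      (g⁻¹ * h)⁻¹ • (wordProd (g :: l))⁻¹ • y = h⁻¹ • (wordProd l)⁻¹ • y := by
    simp only [wordProd_cons, ← mul_smul]
    congr 1
    group
  have hdisp : displacement o (g⁻¹ * h) ≤ displacement o g + displacement o h := by
    simpa using displacement_mul_le o g⁻¹ h
  have hcoh := hB _ hl _ hl' (g⁻¹ * h) (by rw [wordLength_cons]; linarith)
    (by rw [wordLength_cons]; linarith)
  rw [hcancel, hcancel] at hcoh
  exact hcoh hW

lemma IsCoherent.abs_sub_le (hB : IsCoherent o β W δ y B) {l l' : List G} (hl : l ∈ B)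
    (hl' : l' ∈ B) (hW : |β ((wordProd l)⁻¹ • y)| ≤ W) :
    |β ((wordProd l)⁻¹ • y) - β ((wordProd l')⁻¹ • y)| ≤ δ := by
  have h := hB l hl l' hl' 1 (by simpa using wordLength_nonneg o l)
    (by simpa using wordLength_nonneg o l')
  simp only [inv_one, one_smul] at h
  exact h hW

lemma lt_gromovProduct_of_far [IsIsometricSMul G X] {A : ℝ} {z : X} {l : List G} {h : G}
    (hl : A + 2 * wordLength o l < gromovProduct o y (wordProd l • z))
    (hh : displacement o h ≤ wordLength o l) :
    A < gromovProduct o (h⁻¹ • (wordProd l)⁻¹ • y) (h⁻¹ • z) := by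
  set w := wordProd l
  have hbase := gromovProduct_le_add_dist o ((w * h) • o) y (w • z)
  have hmove := gromovProduct_smul (w * h) o (h⁻¹ • w⁻¹ • y) (h⁻¹ • z)
  simp only [mul_smul, smul_inv_smul] at hmove hbase
  have hdisp := (displacement_mul_le o w h).trans (add_le_add (displacement_wordProd_le o l) hh)
  simp only [displacement, mul_smul] at hdisp
  linarith

lemma isCoherent_far [IsIsometricSMul G X] {A E : ℝ} (hE : 0 ≤ E) (y z : X)
    (hβ : ∀ y z : X, A < gromovProduct o y z → |β y| ≤ W + E → |β y - β z| ≤ E) :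
    IsCoherent o β W (2 * E) y
      {l : List G | A + 2 * wordLength o l < gromovProduct o y (wordProd l • z)} := by
  intro l hl l' hl' h hhl hhl' hW
  have hclose := hβ _ _ (lt_gromovProduct_of_far hl hhl) (by linarith)
  have hfar' := lt_gromovProduct_of_far hl' hhl'
  rw [gromovProduct_comm] at hfar'
  have hwindow : |β (h⁻¹ • z)| ≤ W + E := by
    have htri := abs_sub_abs_le_abs_sub (β (h⁻¹ • z)) (β (h⁻¹ • (wordProd l)⁻¹ • y))
    rw [abs_sub_comm] at htri
    linarith
  have hclose' := hβ _ _ hfar' hwindow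
  linarith [abs_sub_le (β (h⁻¹ • (wordProd l)⁻¹ • y)) (β (h⁻¹ • z))
    (β (h⁻¹ • (wordProd l')⁻¹ • y))]

end Coherence

section LetterSplitting

variable {Λ : Type*} [Fintype Λ]

lemma sum_le_mul_of_sum_sq_le {m : ℕ} (hcard : Fintype.card Λ = m ^ 2) {f : Λ → NNReal}
    {H : NNReal} (hf : ∑ i, f i ^ 2 ≤ H ^ 2) : ∑ i, f i ≤ m * H := by
  refine (pow_le_pow_iff_left₀ zero_le zero_le two_ne_zero).1 ?_
  calc (∑ i, f i) ^ 2 ≤ Fintype.card Λ * ∑ i, f i ^ 2 := sq_sum_le_card_mul_sum_sq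
    _ ≤ m ^ 2 * H ^ 2 := by rw [hcard, Nat.cast_pow]; gcongr
    _ = (m * H) ^ 2 := (mul_pow _ _ _).symm

lemma tsum_mul_le_of_sum_le {G : Type*} {κ F : G → ENNReal} {s : Λ → G} {α ρ c T : ENNReal}
    (hα : α ≠ ⊤) (hκ : ∑' g, κ g ≤ 1) (hs : ∀ i, Fintype.card Λ * α ≤ κ (s i))
    (hρ : 1 + c * α ≤ ρ + Fintype.card Λ * α) (hF : ∀ g, F g ≤ T)
    (hsum : ∑ i, F (s i) ≤ c * T) : ∑' g, κ g * F g ≤ ρ * T := by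
  classical
  let letters (g : G) : ENNReal := ∑ i, if g = s i then α else 0
  have letters_mul (F : G → ENNReal) : ∑' g, letters g * F g = α * ∑ i, F (s i) := by
    simp only [letters, Finset.sum_mul]
    rw [Summable.tsum_finsetSum fun _ _ => ENNReal.summable, Finset.mul_sum]
    exact Finset.sum_congr rfl fun i _ => by simp [ite_mul, tsum_ite_eq]
  have letters_le (g : G) : letters g ≤ κ g := by
    by_cases hg : ∃ i, g = s i
    · obtain ⟨i, rfl⟩ := hg
      refine le_trans ?_ (hs i)
      calc letters (s i) ≤ ∑ _i : Λ, α := Finset.sum_le_sum fun j _ => by split_ifs <;> simp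
        _ = Fintype.card Λ * α := by simp
    · push Not at hg
      simp [letters, hg]
  have hsplit (F : G → ENNReal) :
      ∑' g, κ g * F g = ∑' g, (κ g - letters g) * F g + α * ∑ i, F (s i) := by
    rw [← letters_mul, ← ENNReal.tsum_add]
    simp only [← add_mul, tsub_add_cancel_of_le (letters_le _)]
  have hmass : ∑' g, (κ g - letters g) + Fintype.card Λ * α ≤ 1 := by
    simpa [mul_comm α, ← hsplit] using (hsplit fun _ => 1).ge.trans (by simpa using hκ)
  have hrest : ∑' g, (κ g - letters g) + c * α ≤ ρ := by
    refine (ENNReal.add_le_add_iff_right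
      (ENNReal.mul_ne_top (ENNReal.natCast_ne_top (Fintype.card Λ)) hα)).1 (le_trans ?_ hρ)
    rw [add_right_comm]
    gcongr
  calc ∑' g, κ g * F g ≤ ∑' g, (κ g - letters g) * T + α * (c * T) := by
        rw [hsplit]
        gcongr with g
        exact hF g
    _ = (∑' g, (κ g - letters g) + c * α) * T := by rw [ENNReal.tsum_mul_right]; ring
    _ ≤ ρ * T := by gcongr

end LetterSplitting

section WeightedSum

variable {S ι : Type*} [Fintype ι]

/-- The function `∑ h i 1_{B i}`. -/
noncomputable def weightedSum (B : ι → Set S) (h : ι → NNReal) (x : S) : ENNReal :=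
  ∑ i, (B i).indicator (fun _ => (h i : ENNReal)) x

lemma weightedSum_le {B : ι → Set S} (hB : Pairwise (Function.onFun Disjoint B)) {h : ι → NNReal}
    {H : NNReal} (hH : ∑ i, h i ^ 2 ≤ H ^ 2) (x : S) : weightedSum B h x ≤ H := by
  by_cases hx : ∃ i, x ∈ B i
  · obtain ⟨i, hi⟩ := hx
    have hsingle : weightedSum B h x = h i := by
      rw [weightedSum, Finset.sum_eq_single i, Set.indicator_of_mem hi]
      · exact fun j _ hji => Set.indicator_of_notMem
          (fun hj => Set.disjoint_left.1 (hB hji) hj hi) _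
      · exact fun hi => (hi (Finset.mem_univ i)).elim
    have hle : h i ^ 2 ≤ H ^ 2 := (Finset.single_le_sum (f := fun i => h i ^ 2)
      (fun _ _ => zero_le) (Finset.mem_univ i)).trans hH
    rw [hsingle]
    exact_mod_cast (pow_le_pow_iff_left₀ zero_le zero_le two_ne_zero).1 hle
  · push Not at hx
    simp [weightedSum, hx]

end WeightedSum

section Targets

variable {Λ : Type} {G X : Type*} [Group G] [MulAction G X]
  {β : X → ℝ} {s : Λ → G} {p q : Λ → ℝ} {r δ : ℝ} {y : X}

/-- Some word of `B` sees `y` in the target interval of radius `r` around `t`. -/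
def HitsTarget (β : X → ℝ) (y : X) (r t : ℝ) (B : Set (List G)) : Prop :=
  ∃ l ∈ B, |β ((wordProd l)⁻¹ • y) - t| ≤ r

/-- The part of the words continuing `s i` into `B` that is not yet controlled by a target: empty
if `B` hits the target of `i`. -/
def uncommitted (β : X → ℝ) (y : X) (s : Λ → G) (q : Λ → ℝ) (r : ℝ) {ι : Type}
    (B : ι → Set (List G)) (a : Λ × ι) : Set (List G) :=
  {l | ¬ HitsTarget β y r (q a.1) (B a.2) ∧ s a.1 :: l ∈ B a.2}

lemma IsPingPong.near_source_of_mem_uncommitted (hs : IsPingPong β s p q r δ) {ι : Type}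
    {B : ι → Set (List G)} {a : Λ × ι} {l : List G} (hl : l ∈ uncommitted β y s q r B a) :
    |β ((wordProd l)⁻¹ • y) - p a.1| ≤ r := by
  by_contra! hfar
  refine hl.1 ⟨_, hl.2, ?_⟩
  rw [wordProd_cons, mul_inv_rev, mul_smul]
  exact hs.maps_to_target a.1 _ hfar

lemma IsPingPong.pairwise_disjoint_uncommitted (hs : IsPingPong β s p q r δ) {ι : Type}
    {B : ι → Set (List G)} (hB : Pairwise (Function.onFun Disjoint B)) :
    Pairwise (Function.onFun Disjoint (uncommitted β y s q r B)) := by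
  rintro ⟨i, k⟩ ⟨i', k'⟩ hne
  refine Set.disjoint_left.2 fun l hl hl' => ?_
  have hi : i = i' := by
    by_contra hii'
    have hsep := hs.sources_separated i i' hii'
    have hnear := hs.near_source_of_mem_uncommitted hl
    have hnear' := hs.near_source_of_mem_uncommitted hl'
    rw [lt_abs] at hsep
    rw [abs_le] at hnear hnear'
    rcases hsep with hsep | hsep <;> linarith
  subst hi
  exact Set.disjoint_left.1 (hB fun hk => hne (congrArg (Prod.mk i) hk)) hl.2 hl'.2

end Targets

lemma pairwise_disjoint_preimage_cons {G ι : Type*} {B : ι → Set (List G)}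
    (hB : Pairwise (Function.onFun Disjoint B)) (g : G) :
    Pairwise (Function.onFun Disjoint fun k => List.cons g ⁻¹' B k) :=
  fun _ _ hne => (hB hne).preimage _

section CoherentSets

variable {Λ : Type} {G X : Type*} [Group G] [MetricSpace X] [MulAction G X]
  {o : X} {β : X → ℝ} {s : Λ → G} {p q : Λ → ℝ} {r δ W : ℝ} {y : X}

lemma IsCoherent.hitsTarget_unique {B : Set (List G)} (hB : IsCoherent o β W δ y B)
    (hs : IsPingPong β s p q r δ) (hW : ∀ i, |q i| + r ≤ W) {i j : Λ}
    (hi : HitsTarget β y r (q i) B) (hj : HitsTarget β y r (q j) B) : i = j := by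
  obtain ⟨l, hl, hli⟩ := hi
  obtain ⟨l', hl', hlj⟩ := hj
  by_contra hij
  have hwindow : |β ((wordProd l)⁻¹ • y)| ≤ W := by
    have htri := abs_sub_abs_le_abs_sub (β ((wordProd l)⁻¹ • y)) (q i)
    linarith [hW i]
  have hclose := hB.abs_sub_le hl hl' hwindow
  have hfar := hs.targets_separated i j hij
  rw [lt_abs] at hfar
  rw [abs_le] at hli hlj hclose
  rcases hfar with hfar | hfar <;> linarith

lemma IsCoherent.uncommitted [IsIsometricSMul G X] {ι : Type} {B : ι → Set (List G)}
    (hB : ∀ k, IsCoherent o β W δ y (B k)) (a : Λ × ι) :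
    IsCoherent o β W δ y (uncommitted β y s q r B a) := fun _ hl _ hl' =>
  (hB a.2).preimage_cons (s a.1) _ hl.2 _ hl'.2

/-- Along `n` steps of law `κ`, the function `∑ h k 1_{B k}` attached to disjoint coherent sets
`B k` has expectation at most `C` times the `ℓ²` norm of `h`. -/
def CoherentL2Bound (o : X) (β : X → ℝ) (W δ : ℝ) (y : X) (κ : G → ENNReal) (n : ℕ)
    (C : ENNReal) : Prop :=
  ∀ (ι : Type) [Fintype ι] (B : ι → Set (List G)) (h : ι → NNReal) (H : NNReal),
    (∀ k, IsCoherent o β W δ y (B k)) → Pairwise (Function.onFun Disjoint B) →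
    ∑ k, h k ^ 2 ≤ H ^ 2 → iterExp κ n (weightedSum B h) ≤ C * H

variable {κ : G → ENNReal} {n : ℕ} {C : ENNReal}

lemma coherentL2Bound_zero : CoherentL2Bound o β W δ y κ 0 1 := fun _ _ _ _ H _ hdisj hH =>
  (weightedSum_le hdisj hH []).trans (one_mul (H : ENNReal)).ge

variable [IsIsometricSMul G X] {ι : Type} [Fintype ι] {B : ι → Set (List G)} {h : ι → NNReal}
  {H : NNReal}

lemma CoherentL2Bound.committed_le [Fintype Λ] (hC : CoherentL2Bound o β W δ y κ n C)
    (hs : IsPingPong β s p q r δ) (hW : ∀ i, |q i| + r ≤ W) {m : ℕ}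
    (hcard : Fintype.card Λ = m ^ 2) (hB : ∀ k, IsCoherent o β W δ y (B k))
    (hdisj : Pairwise (Function.onFun Disjoint B)) (hH : ∑ k, h k ^ 2 ≤ H ^ 2)
    [∀ i k, Decidable (HitsTarget β y r (q i) (B k))] :
    ∑ i, iterExp κ n (weightedSum (fun k => List.cons (s i) ⁻¹' B k)
      fun k => if HitsTarget β y r (q i) (B k) then h k else 0) ≤ C * (m * H) := by
  let h' (i : Λ) (k : ι) : NNReal := if HitsTarget β y r (q i) (B k) then h k else 0
  let H' (i : Λ) : NNReal := NNReal.sqrt (∑ k, h' i k ^ 2)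
  have hH' (i : Λ) : ∑ k, h' i k ^ 2 = H' i ^ 2 := (NNReal.sq_sqrt _).symm
  have hsq : ∑ i, H' i ^ 2 ≤ H ^ 2 := by
    simp only [← hH']
    rw [Finset.sum_comm]
    refine (Finset.sum_le_sum fun k _ => ?_).trans hH
    by_cases hk : ∃ i, HitsTarget β y r (q i) (B k)
    · obtain ⟨i, hi⟩ := hk
      rw [Finset.sum_eq_single i]
      · simp [h', hi]
      · intro j _ hji
        simp [h', show ¬ HitsTarget β y r (q j) (B k) from
          fun hj => hji ((hB k).hitsTarget_unique hs hW hj hi)]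
      · simp
    · push Not at hk
      simp [h', hk]
  calc _ ≤ ∑ i, C * (H' i : ENNReal) := Finset.sum_le_sum fun i _ =>
        hC ι _ (h' i) (H' i) (fun k => (hB k).preimage_cons (s i))
          (pairwise_disjoint_preimage_cons hdisj (s i)) (hH' i).le
    _ = C * ((∑ i, H' i : NNReal) : ENNReal) := by
        rw [← Finset.mul_sum, ENNReal.ofNNReal_finsetSum]
    _ ≤ C * (m * H) := by
        gcongr
        exact_mod_cast sum_le_mul_of_sum_sq_le hcard hsq

lemma CoherentL2Bound.uncommitted_le [Fintype Λ] (hC : CoherentL2Bound o β W δ y κ n C)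
    (hs : IsPingPong β s p q r δ) {m : ℕ}
    (hcard : Fintype.card Λ = m ^ 2) (hB : ∀ k, IsCoherent o β W δ y (B k))
    (hdisj : Pairwise (Function.onFun Disjoint B)) (hH : ∑ k, h k ^ 2 ≤ H ^ 2) :
    iterExp κ n (weightedSum (uncommitted β y s q r B) fun a => h a.2) ≤ C * (m * H) := by
  have hsq : ∑ a : Λ × ι, h a.2 ^ 2 ≤ (m * H) ^ 2 := by
    simp only [Fintype.sum_prod_type, Finset.sum_const, Finset.card_univ, hcard, nsmul_eq_mul,
      Nat.cast_pow, mul_pow]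
    gcongr
  have hbound := hC (Λ × ι) _ (fun a => h a.2) (m * H) (IsCoherent.uncommitted hB)
    (hs.pairwise_disjoint_uncommitted hdisj) hsq
  rwa [ENNReal.coe_mul, ENNReal.coe_natCast] at hbound

lemma CoherentL2Bound.sum_letters_le [Fintype Λ] (hC : CoherentL2Bound o β W δ y κ n C)
    (hs : IsPingPong β s p q r δ) (hW : ∀ i, |q i| + r ≤ W) {m : ℕ}
    (hcard : Fintype.card Λ = m ^ 2) (hB : ∀ k, IsCoherent o β W δ y (B k))
    (hdisj : Pairwise (Function.onFun Disjoint B)) (hH : ∑ k, h k ^ 2 ≤ H ^ 2) :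
    ∑ i, iterExp κ n (fun l => weightedSum B h (s i :: l)) ≤ 2 * m * (C * H) := by
  classical
  let h' (i : Λ) (k : ι) : NNReal := if HitsTarget β y r (q i) (B k) then h k else 0
  have hsplit (l : List G) : ∑ i, weightedSum B h (s i :: l) ≤
      ∑ i, weightedSum (fun k => List.cons (s i) ⁻¹' B k) (h' i) l +
        weightedSum (uncommitted β y s q r B) (fun a => h a.2) l := by
    simp only [weightedSum]
    rw [Fintype.sum_prod_type, ← Finset.sum_add_distrib]
    refine Finset.sum_le_sum fun i _ => ?_
    rw [← Finset.sum_add_distrib]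
    refine Finset.sum_le_sum fun k _ => ?_
    by_cases hhit : HitsTarget β y r (q i) (B k) <;> by_cases hl : s i :: l ∈ B k <;>
      simp [h', uncommitted, hhit, hl]
  calc _ ≤ iterExp κ n fun l => ∑ i, weightedSum (fun k => List.cons (s i) ⁻¹' B k) (h' i) l +
          weightedSum (uncommitted β y s q r B) (fun a => h a.2) l := by
        rw [← iterExp_sum]
        exact iterExp_mono hsplit
    _ ≤ C * (m * H) + C * (m * H) := by
        rw [iterExp_add, iterExp_sum]
        exact add_le_add (hC.committed_le hs hW hcard hB hdisj hH)
          (hC.uncommitted_le hs hcard hB hdisj hH)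
    _ = 2 * m * (C * H) := by ring

lemma CoherentL2Bound.succ [Fintype Λ] (hC : CoherentL2Bound o β W δ y κ n C)
    (hs : IsPingPong β s p q r δ) (hW : ∀ i, |q i| + r ≤ W) {m : ℕ}
    (hcard : Fintype.card Λ = m ^ 2) {α ρ : ENNReal} (hα : α ≠ ⊤) (hκ : ∑' g, κ g ≤ 1)
    (hletters : ∀ i, m ^ 2 * α ≤ κ (s i)) (hρ : 1 + 2 * m * α ≤ ρ + m ^ 2 * α) :
    CoherentL2Bound o β W δ y κ (n + 1) (ρ * C) := by
  intro ι _ B h H hB hdisj hH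
  have hcard' : (Fintype.card Λ : ENNReal) = m ^ 2 := by rw [hcard, Nat.cast_pow]
  have hstep (g : G) : iterExp κ n (fun l => weightedSum B h (g :: l)) ≤ C * H :=
    hC ι (fun k => List.cons g ⁻¹' B k) h H (fun k => (hB k).preimage_cons g)
      (pairwise_disjoint_preimage_cons hdisj g) hH
  rw [mul_assoc]
  exact tsum_mul_le_of_sum_le hα hκ (by rwa [hcard']) (by rwa [hcard']) hstep
    (hC.sum_letters_le hs hW hcard hB hdisj hH)

theorem IsPingPong.coherentL2Bound [Fintype Λ] (hs : IsPingPong β s p q r δ)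
    (hW : ∀ i, |q i| + r ≤ W) {m : ℕ} (hcard : Fintype.card Λ = m ^ 2) {α ρ : ENNReal}
    (hα : α ≠ ⊤) (hκ : ∑' g, κ g ≤ 1) (hletters : ∀ i, m ^ 2 * α ≤ κ (s i))
    (hρ : 1 + 2 * m * α ≤ ρ + m ^ 2 * α) (n : ℕ) :
    CoherentL2Bound o β W δ y κ n (ρ ^ n) := by
  induction n with
  | zero => rw [pow_zero]; exact coherentL2Bound_zero
  | succ n ih => rw [pow_succ']; exact ih.succ hs hW hcard hα hκ hletters hρ

end CoherentSets

section GromovProductAlongWords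

variable {G X : Type*} [Group G] [MetricSpace X] [MulAction G X]
  {o : X} {β : X → ℝ} {y : X} {κ : G → ENNReal}

lemma gromovProduct_le_dist_right (o p q : X) : gromovProduct o p q ≤ dist o q := by
  have htri := dist_triangle o q p
  rw [dist_comm q p] at htri
  simp only [gromovProduct]
  linarith

/-- The Gromov product of `y` with the endpoint of a word started at `z`, truncated at
`A + 2 * wordLength o l`. Beyond the truncation, words form a coherent set. -/
noncomputable def truncatedGromovProduct (o : X) (A : ℝ) (y z : X) (l : List G) : ENNReal :=
  ENNReal.ofReal (min (gromovProduct o y (wordProd l • z)) (A + 2 * wordLength o l))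

lemma truncatedGromovProduct_cons_le {A : ℝ} (hA : 0 ≤ A) (y z : X) (g : G) (l : List G) :
    truncatedGromovProduct o A y z (g :: l) ≤ truncatedGromovProduct o A y (g • z) l +
      ENNReal.ofReal (2 * displacement o g) *
        {l | A + 2 * wordLength o l < gromovProduct o y (wordProd l • g • z)}.indicator 1 l := by
  simp only [truncatedGromovProduct, wordProd_cons, wordLength_cons, mul_smul]
  set B : Set (List G) := {l | A + 2 * wordLength o l < gromovProduct o y (wordProd l • g • z)}
  by_cases hl : A + 2 * wordLength o l < gromovProduct o y (wordProd l • g • z)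
  · rw [Set.indicator_of_mem (show l ∈ B from hl), min_eq_right hl.le, Pi.one_apply, mul_one,
      ← ENNReal.ofReal_add (by linarith [wordLength_nonneg o l])
        (by linarith [displacement_nonneg o g])]
    exact ENNReal.ofReal_le_ofReal ((min_le_right _ _).trans (by linarith))
  · rw [Set.indicator_of_notMem (show l ∉ B from hl), mul_zero, add_zero, min_eq_left (not_lt.1 hl)]
    exact ENNReal.ofReal_le_ofReal (min_le_left _ _)

lemma CoherentL2Bound.indicator_le {W δ : ℝ} {n : ℕ} {C : ENNReal}
    (hC : CoherentL2Bound o β W δ y κ n C) {B : Set (List G)} (hB : IsCoherent o β W δ y B) :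
    iterExp κ n (B.indicator 1) ≤ C := by
  have h := hC Unit (fun _ => B) (fun _ => 1) 1 (fun _ => hB)
    (fun i j hij => absurd (Subsingleton.elim i j) hij) (by simp)
  rw [ENNReal.coe_one, mul_one] at h
  exact (iterExp_mono fun l => by simp [weightedSum, Pi.one_def]).trans h

theorem iterExp_gromovProduct_le [IsIsometricSMul G X] {W A E : ℝ} {ρ : ENNReal} (hA : 0 ≤ A)
    (hE : 0 ≤ E) (hβ : ∀ y z : X, A < gromovProduct o y z → |β y| ≤ W + E → |β y - β z| ≤ E)
    (hκ : ∑' g, κ g ≤ 1) (hC : ∀ n, CoherentL2Bound o β W (2 * E) y κ n (ρ ^ n)) (n : ℕ) :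
    iterExp κ n (fun l => ENNReal.ofReal (gromovProduct o y (wordProd l • o))) ≤
      ENNReal.ofReal A + (∑' g, κ g * ENNReal.ofReal (2 * displacement o g)) *
        ∑ j ∈ Finset.range n, ρ ^ j := by
  set Λ := ∑' g, κ g * ENNReal.ofReal (2 * displacement o g) with hΛ
  suffices htrunc : ∀ z : X, iterExp κ n (truncatedGromovProduct o A y z) ≤
      ENNReal.ofReal A + Λ * ∑ j ∈ Finset.range n, ρ ^ j by
    refine le_trans (iterExp_mono fun l => ENNReal.ofReal_le_ofReal (le_min le_rfl ?_)) (htrunc o)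
    have hword : gromovProduct o y (wordProd l • o) ≤ wordLength o l :=
      (gromovProduct_le_dist_right _ _ _).trans (displacement_wordProd_le o l)
    linarith [wordLength_nonneg o l]
  induction n with
  | zero => exact fun z => by simp [iterExp, truncatedGromovProduct]
  | succ n ih =>
    intro z
    set T := ENNReal.ofReal A + Λ * ∑ j ∈ Finset.range n, ρ ^ j
    have hstep (g : G) : iterExp κ n (fun l => truncatedGromovProduct o A y z (g :: l)) ≤
        T + ENNReal.ofReal (2 * displacement o g) * ρ ^ n := by
      refine (iterExp_mono fun l => truncatedGromovProduct_cons_le hA y z g l).trans ?_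
      rw [iterExp_add, iterExp_const_mul]
      gcongr
      · exact ih (g • z)
      · exact (hC n).indicator_le (isCoherent_far hE y (g • z) hβ)
    calc _ ≤ ∑' g, κ g * (T + ENNReal.ofReal (2 * displacement o g) * ρ ^ n) :=
          ENNReal.tsum_le_tsum fun g => mul_le_mul_right (hstep g) _
      _ = (∑' g, κ g) * T + Λ * ρ ^ n := by
          simp only [mul_add, ENNReal.tsum_add, ← mul_assoc, ENNReal.tsum_mul_right, hΛ]
      _ ≤ 1 * T + Λ * ρ ^ n := by gcongr
      _ = _ := by rw [one_mul, Finset.sum_range_succ, mul_add, add_assoc]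

end GromovProductAlongWords

section FiniteMoment

variable {G X : Type*} [Group G] [MetricSpace X] [MulAction G X] {o : X}

/-- The weight `1 + d(o, g o)` defining the norm `‖·‖_{0,1}`. -/
noncomputable def weight (o : X) (g : G) : ℝ := 1 + displacement o g

lemma one_le_weight (o : X) (g : G) : 1 ≤ weight o g :=
  le_add_of_nonneg_right (displacement_nonneg o g)

lemma weight_pos (o : X) (g : G) : 0 < weight o g := one_pos.trans_le (one_le_weight o g)

lemma weight_mul_le [IsIsometricSMul G X] (o : X) (g h : G) :
    weight o (g * h) ≤ weight o g * weight o h := by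
  simp only [weight]
  nlinarith [displacement_mul_le o g h,
    mul_nonneg (displacement_nonneg o g) (displacement_nonneg o h)]

/-- The signed measures `η` with `‖η‖_{0,1} < ∞`, as a subspace of the functions on `G`. -/
def finiteMomentSubmodule (G : Type*) {X : Type*} [Group G] [MetricSpace X] [MulAction G X]
    (o : X) : Submodule ℝ (G → ℝ) where
  carrier := {η | Summable fun g => weight o g * |η g|}
  zero_mem' := by simp [summable_zero]
  add_mem' {a b} ha hb := by
    refine (ha.add hb).of_nonneg_of_le
      (fun g => mul_nonneg (weight_pos o g).le (abs_nonneg _)) fun g => ?_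
    rw [← mul_add]
    exact mul_le_mul_of_nonneg_left (abs_add_le _ _) (weight_pos o g).le
  smul_mem' c a ha := by
    refine (ha.mul_left |c|).congr fun g => ?_
    rw [Pi.smul_apply, smul_eq_mul, abs_mul, mul_left_comm]

/-- The space of signed measures with `‖η‖_{0,1} < ∞`. It is a type synonym, so that it carries
the topology of the norm `‖·‖_{0,1}` and not that of pointwise convergence. -/
def FiniteMoment (G : Type*) {X : Type*} [Group G] [MetricSpace X] [MulAction G X] (o : X) :
    Type _ :=
  finiteMomentSubmodule G o

/-- The functions on `G` of at most linear growth; signed measures in `FiniteMoment G o` act on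
them by averaging over right translations. -/
def LinearGrowth (G : Type*) {X : Type*} [Group G] [MetricSpace X] [MulAction G X] (o : X) :
    Submodule ℝ (G → ℝ) where
  carrier := {F | ∃ C : ℝ, ∀ g, |F g| ≤ C * weight o g}
  zero_mem' := ⟨0, by simp⟩
  add_mem' := by
    rintro a b ⟨C, hC⟩ ⟨D, hD⟩
    refine ⟨C + D, fun g => (abs_add_le _ _).trans ?_⟩
    rw [add_mul]
    exact add_le_add (hC g) (hD g)
  smul_mem' := by
    rintro c a ⟨C, hC⟩
    refine ⟨|c| * C, fun g => ?_⟩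
    rw [Pi.smul_apply, smul_eq_mul, abs_mul, mul_assoc]
    exact mul_le_mul_of_nonneg_left (hC g) (abs_nonneg c)

namespace FiniteMoment

noncomputable instance : AddCommGroup (FiniteMoment G o) :=
  inferInstanceAs (AddCommGroup (finiteMomentSubmodule G o))

noncomputable instance : Module ℝ (FiniteMoment G o) :=
  inferInstanceAs (Module ℝ (finiteMomentSubmodule G o))

instance : FunLike (FiniteMoment G o) G ℝ where
  coe η := η.1
  coe_injective := Subtype.val_injective

@[simp] lemma zero_apply (g : G) : (0 : FiniteMoment G o) g = 0 := rfl

@[simp] lemma add_apply (η ζ : FiniteMoment G o) (g : G) : (η + ζ) g = η g + ζ g := rfl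

@[simp] lemma sub_apply (η ζ : FiniteMoment G o) (g : G) : (η - ζ) g = η g - ζ g := rfl

@[simp] lemma smul_apply (c : ℝ) (η : FiniteMoment G o) (g : G) : (c • η) g = c * η g := rfl

lemma summable_weight_mul_abs (η : FiniteMoment G o) : Summable fun g => weight o g * |η g| := η.2

noncomputable instance : Norm (FiniteMoment G o) := ⟨fun η => ∑' g, weight o g * |η g|⟩

lemma norm_def (η : FiniteMoment G o) : ‖η‖ = ∑' g, weight o g * |η g| := rfl

lemma abs_apply_le_norm (η : FiniteMoment G o) (g : G) : |η g| ≤ ‖η‖ :=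
  (le_mul_of_one_le_left (abs_nonneg _) (one_le_weight o g)).trans
    (η.summable_weight_mul_abs.le_tsum g fun h _ => mul_nonneg (weight_pos o h).le (abs_nonneg _))

lemma normedSpaceCore : NormedSpace.Core ℝ (FiniteMoment G o) where
  norm_nonneg _ := tsum_nonneg fun g => mul_nonneg (weight_pos o g).le (abs_nonneg _)
  norm_smul c η := by
    simp only [norm_def, smul_apply, abs_mul, mul_left_comm _ |c|, tsum_mul_left, Real.norm_eq_abs]
  norm_triangle η ζ := by
    simp only [norm_def]
    rw [← η.summable_weight_mul_abs.tsum_add ζ.summable_weight_mul_abs]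
    refine (η + ζ).summable_weight_mul_abs.tsum_le_tsum (fun g => ?_)
      (η.summable_weight_mul_abs.add ζ.summable_weight_mul_abs)
    rw [← mul_add]
    exact mul_le_mul_of_nonneg_left (abs_add_le _ _) (weight_pos o g).le
  norm_eq_zero_iff η := by
    refine ⟨fun h => DFunLike.ext _ _ fun g => ?_, fun h => by simp [h, norm_def]⟩
    exact abs_nonpos_iff.1 ((η.abs_apply_le_norm g).trans h.le)

noncomputable instance : NormedAddCommGroup (FiniteMoment G o) := .ofCore normedSpaceCore

noncomputable instance : NormedSpace ℝ (FiniteMoment G o) := .ofCore normedSpaceCore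

lemma summable_mul (η : FiniteMoment G o) {Φ : G → ℝ} {C : ℝ}
    (hΦ : ∀ g, |Φ g| ≤ C * weight o g) : Summable fun g => η g * Φ g := by
  refine (η.summable_weight_mul_abs.mul_left C).of_norm_bounded fun g => ?_
  rw [Real.norm_eq_abs, abs_mul, mul_comm |η g|, ← mul_assoc]
  exact mul_le_mul_of_nonneg_right (hΦ g) (abs_nonneg _)

lemma abs_tsum_mul_le (η : FiniteMoment G o) {Φ : G → ℝ} {C : ℝ}
    (hΦ : ∀ g, |Φ g| ≤ C * weight o g) : |∑' g, η g * Φ g| ≤ C * ‖η‖ := by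
  rw [← Real.norm_eq_abs, norm_def]
  refine tsum_of_norm_bounded (η.summable_weight_mul_abs.hasSum.mul_left C) fun g => ?_
  rw [Real.norm_eq_abs, abs_mul, mul_comm |η g|, ← mul_assoc]
  exact mul_le_mul_of_nonneg_right (hΦ g) (abs_nonneg _)

lemma summable (η : FiniteMoment G o) : Summable η := by
  simpa using η.summable_mul (Φ := fun _ => 1) (C := 1) (by simp [one_le_weight])

/-- The total mass `∑_g η(g)`, as a continuous linear functional. -/
noncomputable def mass : FiniteMoment G o →L[ℝ] ℝ :=
  LinearMap.mkContinuous
    { toFun := fun η => ∑' g, η g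
      map_add' := fun η ζ => η.summable.tsum_add ζ.summable
      map_smul' := fun c η => by simp [tsum_mul_left] }
    1 fun η => show |∑' g, η g| ≤ 1 * ‖η‖ by
      simpa only [mul_one] using
        η.abs_tsum_mul_le (Φ := fun _ => 1) (C := 1) (by simp [one_le_weight])

lemma mass_apply (η : FiniteMoment G o) : mass η = ∑' g, η g := rfl

lemma isProbMeasure_iff (μ : FiniteMoment G o) :
    IsProbMeasure μ ↔ (∀ g, 0 ≤ μ g) ∧ mass μ = 1 := by
  simp [IsProbMeasure, μ.summable, mass_apply]

end FiniteMoment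

namespace LinearGrowth

instance : FunLike (LinearGrowth G o) G ℝ where
  coe F := F.1
  coe_injective := Subtype.val_injective

@[simp] lemma zero_apply (g : G) : (0 : LinearGrowth G o) g = 0 := rfl

@[simp] lemma add_apply (F F' : LinearGrowth G o) (g : G) : (F + F') g = F g + F' g := rfl

@[simp] lemma sub_apply (F F' : LinearGrowth G o) (g : G) : (F - F') g = F g - F' g := rfl

@[simp] lemma smul_apply (c : ℝ) (F : LinearGrowth G o) (g : G) : (c • F) g = c * F g := rfl

lemma sum_apply {ι : Type*} (s : Finset ι) (F : ι → LinearGrowth G o) (g : G) :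
    (∑ i ∈ s, F i) g = ∑ i ∈ s, F i g :=
  map_sum ((LinearMap.proj g).comp (LinearGrowth G o).subtype) F s

lemma exists_abs_apply_mul_le [IsIsometricSMul G X] (F : LinearGrowth G o) :
    ∃ C, ∀ x h, |F (x * h)| ≤ C * weight o x * weight o h := by
  obtain ⟨C, hC⟩ := F.2
  have hC0 : 0 ≤ C :=
    nonneg_of_mul_nonneg_left ((abs_nonneg _).trans (hC 1)) (weight_pos o (1 : G))
  refine ⟨C, fun x h => (hC _).trans ?_⟩
  rw [mul_assoc]
  exact mul_le_mul_of_nonneg_left (weight_mul_le o x h) hC0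

/-- A bounded function, as a function of linear growth. -/
noncomputable def ofBounded (F : G → ℝ) {B : ℝ} (hF : ∀ g, |F g| ≤ B) : LinearGrowth G o :=
  ⟨F, B, fun g => (hF g).trans
    (le_mul_of_one_le_right ((abs_nonneg _).trans (hF g)) (one_le_weight o g))⟩

/-- The constant functions. -/
noncomputable def const (c : ℝ) : LinearGrowth G o := ofBounded (fun _ => c) fun _ => le_rfl

@[simp] lemma const_apply (c : ℝ) (g : G) : (const c : LinearGrowth G o) g = c := rfl

/-- The indicator function of a point. -/
noncomputable def single (g : G) : LinearGrowth G o :=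
  ofBounded (({g} : Set G).indicator 1) (B := 1) fun h => by
    by_cases hh : h ∈ ({g} : Set G) <;> simp [hh]

lemma single_apply (g h : G) : (single g : LinearGrowth G o) h = ({g} : Set G).indicator 1 h := rfl

/-- The displacement function `g ↦ d(o, g o)`. -/
noncomputable def length (o : X) : LinearGrowth G o :=
  ⟨displacement o, 1, fun g => by
    rw [abs_of_nonneg (displacement_nonneg o g), one_mul]
    exact le_add_of_nonneg_left zero_le_one⟩

@[simp] lemma length_apply (g : G) : (length o : LinearGrowth G o) g = displacement o g := rfl

/-- The left translate `g ↦ F (x * g)`. -/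
noncomputable def translate [IsIsometricSMul G X] (x : G) (F : LinearGrowth G o) :
    LinearGrowth G o :=
  ⟨fun g => F (x * g), by
    obtain ⟨C, hC⟩ := exists_abs_apply_mul_le F
    exact ⟨C * weight o x, hC x⟩⟩

@[simp] lemma translate_apply [IsIsometricSMul G X] (x : G) (F : LinearGrowth G o) (g : G) :
    translate x F g = F (x * g) := rfl

end LinearGrowth

end FiniteMoment

section ConvolutionAlgebra

variable {G X : Type*} [Group G] [MetricSpace X] [MulAction G X] {o : X}

namespace FiniteMoment

lemma summable_conv_mul (μ ν : FiniteMoment G o) {Φ : G → ℝ} {C : ℝ}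
    (hΦ : ∀ g h, |Φ (g * h)| ≤ C * (weight o g * weight o h)) :
    Summable fun p : G × G => μ p.1 * ν (p.1⁻¹ * p.2) * Φ p.2 := by
  let e : G × G ≃ G × G :=
    { toFun := fun p => (p.1, p.1 * p.2)
      invFun := fun p => (p.1, p.1⁻¹ * p.2)
      left_inv := fun p => by simp
      right_inv := fun p => by simp }
  rw [← e.summable_iff]
  refine ((μ.summable_weight_mul_abs.mul_of_nonneg ν.summable_weight_mul_abs
    (fun g => mul_nonneg (weight_pos o g).le (abs_nonneg _))
    (fun g => mul_nonneg (weight_pos o g).le (abs_nonneg _))).mul_left C).of_norm_bounded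
      fun p => ?_
  simp only [e, Function.comp, Equiv.coe_fn_mk, inv_mul_cancel_left, Real.norm_eq_abs, abs_mul]
  calc |μ p.1| * |ν p.2| * |Φ (p.1 * p.2)|
      ≤ |μ p.1| * |ν p.2| * (C * (weight o p.1 * weight o p.2)) := by
        gcongr
        exact hΦ _ _
    _ = _ := by ring

/-- The total variation measure `|μ|`. -/
noncomputable def totalVariation (μ : FiniteMoment G o) : FiniteMoment G o :=
  ⟨fun g => |μ g|, by simpa [finiteMomentSubmodule] using μ.summable_weight_mul_abs⟩

lemma totalVariation_apply (μ : FiniteMoment G o) (g : G) : μ.totalVariation g = |μ g| := rfl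

lemma norm_totalVariation (μ : FiniteMoment G o) : ‖μ.totalVariation‖ = ‖μ‖ := by
  simp only [norm_def, totalVariation_apply, abs_abs]

noncomputable instance : One (FiniteMoment G o) :=
  ⟨({1} : Set G).indicator fun _ => 1,
    summable_of_ne_finset_zero (s := {1}) fun g hg => by simp_all⟩

lemma coe_one : ⇑(1 : FiniteMoment G o) = ({1} : Set G).indicator fun _ => 1 := rfl

lemma tsum_conv_mul (μ ν : FiniteMoment G o) {Φ : G → ℝ} {C : ℝ}
    (hΦ : ∀ g h, |Φ (g * h)| ≤ C * (weight o g * weight o h)) :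
    ∑' g, conv μ ν g * Φ g = ∑' h, μ h * ∑' k, ν k * Φ (h * k) := by
  have hshift (h : G) :
      μ h * ∑' k, ν k * Φ (h * k) = ∑' g, μ h * ν (h⁻¹ * g) * Φ g := by
    rw [← tsum_mul_left, ← (Equiv.mulLeft h).tsum_eq fun g => μ h * ν (h⁻¹ * g) * Φ g]
    simp [mul_assoc]
  simp only [hshift]
  rw [← (μ.summable_conv_mul ν hΦ).tsum_comm]
  simp only [conv, tsum_mul_right]

variable [IsIsometricSMul G X]

lemma summable_mul_comp_mul (η : FiniteMoment G o) (F : LinearGrowth G o) (x : G) :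
    Summable fun h => η h * F (x * h) :=
  let ⟨_, hC⟩ := LinearGrowth.exists_abs_apply_mul_le F
  η.summable_mul (hC x)

lemma summable_conv_totalVariation (μ ν : FiniteMoment G o) :
    Summable fun p : G × G => |μ p.2| * |ν (p.2⁻¹ * p.1)| * weight o p.1 :=
  (μ.totalVariation.summable_conv_mul ν.totalVariation (Φ := weight o) (C := 1) fun g h => by
    rw [abs_of_pos (weight_pos o _), one_mul]
    exact weight_mul_le o g h).prod_symm

lemma abs_conv_le (μ ν : FiniteMoment G o) (g : G) :
    |conv μ ν g| ≤ conv μ.totalVariation ν.totalVariation g :=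
  tsum_of_norm_bounded ((summable_mul_right_iff (weight_pos o g).ne').1
    ((summable_conv_totalVariation μ ν).prod_factor g)).hasSum
    fun h => by rw [Real.norm_eq_abs, abs_mul]

lemma conv_mem_finiteMomentSubmodule (μ ν : FiniteMoment G o) :
    conv μ ν ∈ finiteMomentSubmodule G o := by
  refine (summable_conv_totalVariation μ ν).prod.of_nonneg_of_le
    (fun g => mul_nonneg (weight_pos o g).le (abs_nonneg _)) fun g => ?_
  change weight o g * |conv μ ν g| ≤ ∑' h, |μ h| * |ν (h⁻¹ * g)| * weight o g
  rw [tsum_mul_right, mul_comm]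
  exact mul_le_mul_of_nonneg_right (abs_conv_le μ ν g) (weight_pos o g).le

noncomputable instance : Mul (FiniteMoment G o) :=
  ⟨fun μ ν => ⟨conv μ ν, conv_mem_finiteMomentSubmodule μ ν⟩⟩

lemma coe_mul (μ ν : FiniteMoment G o) : ⇑(μ * ν) = conv μ ν := rfl

noncomputable instance : SMul (FiniteMoment G o) (LinearGrowth G o) :=
  ⟨fun η F => ⟨fun x => ∑' h, η h * F (x * h), by
    obtain ⟨C, hC⟩ := LinearGrowth.exists_abs_apply_mul_le F
    refine ⟨C * ‖η‖, fun x => (η.abs_tsum_mul_le (hC x)).trans_eq ?_⟩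
    ring⟩⟩

lemma smul_growth_apply (η : FiniteMoment G o) (F : LinearGrowth G o) (x : G) :
    (η • F) x = ∑' h, η h * F (x * h) := rfl

lemma mul_smul_growth (μ ν : FiniteMoment G o) (F : LinearGrowth G o) :
    (μ * ν) • F = μ • ν • F := by
  refine DFunLike.ext _ _ fun x => ?_
  obtain ⟨C, hC⟩ := LinearGrowth.exists_abs_apply_mul_le (LinearGrowth.translate x F)
  have hconv := tsum_conv_mul μ ν fun g h => (hC g h).trans_eq (mul_assoc _ _ _)
  simpa only [smul_growth_apply, coe_mul, LinearGrowth.translate_apply, mul_assoc] using hconv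

lemma one_smul_growth (F : LinearGrowth G o) : (1 : FiniteMoment G o) • F = F := by
  refine DFunLike.ext _ _ fun x => ?_
  rw [smul_growth_apply, tsum_eq_single 1 fun h hh => by simp [coe_one, hh]]
  simp [coe_one]

lemma smul_growth_add (η : FiniteMoment G o) (F F' : LinearGrowth G o) :
    η • (F + F') = η • F + η • F' := by
  refine DFunLike.ext _ _ fun x => ?_
  simp only [smul_growth_apply, LinearGrowth.add_apply, mul_add]
  exact (η.summable_mul_comp_mul F x).tsum_add (η.summable_mul_comp_mul F' x)

lemma add_smul_growth (η ζ : FiniteMoment G o) (F : LinearGrowth G o) :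
    (η + ζ) • F = η • F + ζ • F := by
  refine DFunLike.ext _ _ fun x => ?_
  simp only [smul_growth_apply, LinearGrowth.add_apply, add_apply, add_mul]
  exact (η.summable_mul_comp_mul F x).tsum_add (ζ.summable_mul_comp_mul F x)

lemma smul_single_apply_one (η : FiniteMoment G o) (g : G) :
    (η • (LinearGrowth.single g : LinearGrowth G o)) 1 = η g := by
  rw [smul_growth_apply, tsum_eq_single g fun h hh => by simp [LinearGrowth.single_apply, hh]]
  simp [LinearGrowth.single_apply]

lemma eq_of_smul_growth_eq {η ζ : FiniteMoment G o} (h : ∀ F : LinearGrowth G o, η • F = ζ • F) :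
    η = ζ :=
  DFunLike.ext _ _ fun g => by rw [← smul_single_apply_one, h, smul_single_apply_one]

-- Signed measures act faithfully on functions of linear growth, and the ring laws are laws of
-- this action.
noncomputable instance : Ring (FiniteMoment G o) where
  __ := (inferInstance : AddCommGroup (FiniteMoment G o))
  mul_assoc a b c := eq_of_smul_growth_eq fun F => by simp only [mul_smul_growth]
  one_mul a := eq_of_smul_growth_eq fun F => by rw [mul_smul_growth, one_smul_growth]
  mul_one a := eq_of_smul_growth_eq fun F => by rw [mul_smul_growth, one_smul_growth]
  left_distrib a b c := eq_of_smul_growth_eq fun F => by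
    simp only [mul_smul_growth, add_smul_growth, smul_growth_add]
  right_distrib a b c := eq_of_smul_growth_eq fun F => by
    simp only [mul_smul_growth, add_smul_growth]
  zero_mul a := DFunLike.ext _ _ fun g => by simp [coe_mul, conv]
  mul_zero a := DFunLike.ext _ _ fun g => by simp [coe_mul, conv]

lemma norm_mul_le (μ ν : FiniteMoment G o) : ‖μ * ν‖ ≤ ‖μ‖ * ‖ν‖ := by
  have hsum (h : G) : |∑' k, |ν k| * weight o (h * k)| ≤ ‖ν‖ * weight o h := by
    rw [mul_comm, ← norm_totalVariation ν]
    refine ν.totalVariation.abs_tsum_mul_le fun k => ?_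
    rw [abs_of_pos (weight_pos o _)]
    exact weight_mul_le o h k
  calc ‖μ * ν‖ ≤ ∑' g, (μ.totalVariation * ν.totalVariation) g * weight o g := by
        refine (μ * ν).summable_weight_mul_abs.tsum_le_tsum (fun g => ?_)
          ((μ.totalVariation * ν.totalVariation).summable_mul (C := 1) fun g => ?_)
        · rw [mul_comm]
          exact mul_le_mul_of_nonneg_right (abs_conv_le μ ν g) (weight_pos o g).le
        · rw [abs_of_pos (weight_pos o g), one_mul]
    _ = ∑' h, |μ h| * ∑' k, |ν k| * weight o (h * k) :=
        tsum_conv_mul μ.totalVariation ν.totalVariation (C := 1) fun g h => by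
          rw [abs_of_pos (weight_pos o _), one_mul]
          exact weight_mul_le o g h
    _ ≤ ‖ν‖ * ‖μ.totalVariation‖ :=
        (le_abs_self _).trans (μ.totalVariation.abs_tsum_mul_le hsum)
    _ = ‖μ‖ * ‖ν‖ := by rw [norm_totalVariation, mul_comm]

noncomputable instance : NormedRing (FiniteMoment G o) where
  __ := (inferInstance : NormedAddCommGroup (FiniteMoment G o))
  __ := (inferInstance : Ring (FiniteMoment G o))
  norm_mul_le := norm_mul_le

noncomputable instance : Algebra ℝ (FiniteMoment G o) :=
  .ofModule
    (fun c a b => DFunLike.ext _ _ fun g => by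
      simp [coe_mul, conv, mul_assoc, tsum_mul_left])
    (fun c a b => DFunLike.ext _ _ fun g => by
      simp [coe_mul, conv, mul_left_comm _ c, tsum_mul_left])

noncomputable instance : Module (FiniteMoment G o) (LinearGrowth G o) where
  one_smul := one_smul_growth
  mul_smul := mul_smul_growth
  smul_zero η := DFunLike.ext _ _ fun x => by simp [smul_growth_apply]
  smul_add := smul_growth_add
  add_smul := add_smul_growth
  zero_smul F := DFunLike.ext _ _ fun x => by simp [smul_growth_apply]

instance : IsScalarTower ℝ (FiniteMoment G o) (LinearGrowth G o) where
  smul_assoc c η F := DFunLike.ext _ _ fun x => by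
    simp [smul_growth_apply, mul_assoc, tsum_mul_left]

lemma coe_pow (μ : FiniteMoment G o) (n : ℕ) : ⇑(μ ^ n) = convPow μ n := by
  induction n with
  | zero => rw [pow_zero, coe_one, convPow]
  | succ n ih => rw [pow_succ', coe_mul, ih, convPow]

lemma smul_translate (η : FiniteMoment G o) (x : G) (F : LinearGrowth G o) :
    η • LinearGrowth.translate x F = LinearGrowth.translate x (η • F) :=
  DFunLike.ext _ _ fun y => by
    simp only [smul_growth_apply, LinearGrowth.translate_apply, mul_assoc]

end FiniteMoment

end ConvolutionAlgebra

section ProbabilityMeasures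

variable {G X : Type*} [Group G] [MetricSpace X] [MulAction G X] {o : X}

namespace FiniteMoment

lemma continuous_apply (g : G) : Continuous fun η : FiniteMoment G o => η g :=
  (LipschitzWith.of_dist_le_mul (K := 1) fun η ζ => by
    simpa [dist_eq_norm, Real.dist_eq] using (η - ζ).abs_apply_le_norm g).continuous

lemma firstMoment_le_norm (κ : FiniteMoment G o) : firstMoment o κ ≤ ‖κ‖ := by
  rw [← one_mul ‖κ‖]
  exact (le_abs_self _).trans
    (κ.abs_tsum_mul_le (Φ := LinearGrowth.length o) (C := 1) fun g => by
      rw [LinearGrowth.length_apply, abs_of_nonneg (displacement_nonneg o g), one_mul]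
      exact le_add_of_nonneg_left zero_le_one)

lemma firstMoment_nonneg {κ : FiniteMoment G o} (hκ : IsProbMeasure κ) : 0 ≤ firstMoment o κ :=
  tsum_nonneg fun g => mul_nonneg (hκ.1 g) dist_nonneg

lemma mass_eq_one {κ : FiniteMoment G o} (hκ : IsProbMeasure κ) : mass κ = 1 := hκ.2.2

lemma tsum_ofReal {κ : FiniteMoment G o} (hκ : IsProbMeasure κ) :
    ∑' g, ENNReal.ofReal (κ g) = 1 := by
  rw [← ENNReal.ofReal_tsum_of_nonneg hκ.1 hκ.2.1, hκ.2.2, ENNReal.ofReal_one]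

variable [IsIsometricSMul G X]

lemma mass_mul (μ ν : FiniteMoment G o) : mass (μ * ν) = mass μ * mass ν := by
  have h := tsum_conv_mul μ ν (Φ := fun _ => 1) (C := 1) fun g h => by
    rw [abs_one, one_mul]
    exact one_le_mul_of_one_le_of_one_le (one_le_weight o g) (one_le_weight o h)
  simpa only [mass_apply, coe_mul, mul_one, tsum_mul_right] using h

lemma isProbMeasure_mul {μ ν : FiniteMoment G o} (hμ : IsProbMeasure μ) (hν : IsProbMeasure ν) :
    IsProbMeasure (μ * ν) := by
  rw [isProbMeasure_iff] at *
  exact ⟨fun g => tsum_nonneg fun h => mul_nonneg (hμ.1 h) (hν.1 _), by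
    rw [mass_mul, hμ.2, hν.2, one_mul]⟩

lemma isProbMeasure_pow {μ : FiniteMoment G o} (hμ : IsProbMeasure μ) (n : ℕ) :
    IsProbMeasure (μ ^ n) := by
  induction n with
  | zero =>
    rw [pow_zero, isProbMeasure_iff, mass_apply, tsum_eq_single 1 fun g hg => by simp [coe_one, hg]]
    exact ⟨fun g => Set.indicator_nonneg (fun _ _ => zero_le_one) g, by simp [coe_one]⟩
  | succ n ih => exact pow_succ μ n ▸ isProbMeasure_mul ih hμ

lemma mul_apply_mul_le {μ ν : FiniteMoment G o} (hμ : ∀ g, 0 ≤ μ g) (hν : ∀ g, 0 ≤ ν g) (g h : G) :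
    μ g * ν h ≤ (μ * ν) (g * h) := by
  have hsum : Summable fun k => μ k * ν (k⁻¹ * (g * h)) :=
    μ.summable_mul (C := ‖ν‖) fun k => (ν.abs_apply_le_norm _).trans
      (le_mul_of_one_le_right (norm_nonneg ν) (one_le_weight o k))
  simpa [coe_mul, conv] using hsum.le_tsum g fun k _ => mul_nonneg (hμ k) (hν _)

lemma pow_add_apply_pos {μ : FiniteMoment G o} (hμ : IsProbMeasure μ) {m n : ℕ} {g h : G}
    (hg : 0 < (μ ^ m) g) (hh : 0 < (μ ^ n) h) : 0 < (μ ^ (m + n)) (g * h) :=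
  (mul_pos hg hh).trans_le <| pow_add μ m n ▸
    mul_apply_mul_le (isProbMeasure_pow hμ m).1 (isProbMeasure_pow hμ n).1 g h

lemma pow_mul_apply_pos {μ : FiniteMoment G o} (hμ : IsProbMeasure μ) {m : ℕ} {g : G}
    (hg : 0 < (μ ^ m) g) (j : ℕ) : 0 < (μ ^ (j * m)) (g ^ j) := by
  induction j with
  | zero => simp [coe_one]
  | succ j ih => rw [Nat.succ_mul, pow_succ]; exact pow_add_apply_pos hμ ih hg

lemma exists_pow_apply_pos {μ : FiniteMoment G o} (hμ : IsProbMeasure μ) {g : G}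
    (hg : g ∈ Subsemigroup.closure {x : G | 0 < μ x}) : ∃ n, 0 < n ∧ 0 < (μ ^ n) g := by
  induction hg using Subsemigroup.closure_induction with
  | mem x hx => exact ⟨1, one_pos, by rwa [pow_one]⟩
  | mul x y _ _ hx hy =>
    obtain ⟨m, hm, hx⟩ := hx
    obtain ⟨n, -, hy⟩ := hy
    exact ⟨m + n, by lia, pow_add_apply_pos hμ hx hy⟩

lemma smul_growth_mono {κ : FiniteMoment G o} (hκ : ∀ g, 0 ≤ κ g) {F F' : LinearGrowth G o}
    (h : ∀ x, F x ≤ F' x) (x : G) : (κ • F) x ≤ (κ • F') x :=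
  (κ.summable_mul_comp_mul F x).tsum_le_tsum (fun g => mul_le_mul_of_nonneg_left (h _) (hκ g))
    (κ.summable_mul_comp_mul F' x)

lemma smul_const (η : FiniteMoment G o) (c : ℝ) :
    η • (LinearGrowth.const c : LinearGrowth G o) = LinearGrowth.const (mass η * c) :=
  DFunLike.ext _ _ fun x => by
    simp only [smul_growth_apply, LinearGrowth.const_apply, tsum_mul_right, mass_apply]

lemma abs_smul_growth_le {κ : FiniteMoment G o} (hκ : ∀ g, 0 ≤ κ g) {F F' : LinearGrowth G o}
    (h : ∀ x, |F x| ≤ F' x) (x : G) : |(κ • F) x| ≤ (κ • F') x := by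
  have hlower := smul_growth_mono hκ (F := -F') (fun x => (abs_le.1 (h x)).1) x
  rw [smul_neg] at hlower
  exact abs_le.2 ⟨hlower, smul_growth_mono hκ (fun x => (abs_le.1 (h x)).2) x⟩

lemma abs_smul_apply_le_of_isProbMeasure {κ : FiniteMoment G o} (hκ : IsProbMeasure κ)
    {F : LinearGrowth G o} {B : ℝ} (hF : ∀ x, |F x| ≤ B) (x : G) : |(κ • F) x| ≤ B := by
  simpa [smul_const, mass_eq_one hκ] using abs_smul_growth_le hκ.1 (F' := LinearGrowth.const B) hF x

lemma smul_length_one (κ : FiniteMoment G o) :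
    (κ • (LinearGrowth.length o : LinearGrowth G o)) 1 = firstMoment o κ := by
  simp [smul_growth_apply, firstMoment, displacement]

lemma abs_smul_length_sub_le {κ : FiniteMoment G o} (hκ : IsProbMeasure κ) (x : G) :
    |(κ • (LinearGrowth.length o : LinearGrowth G o)) x - displacement o x| ≤ firstMoment o κ := by
  have hincrement (g : G) : |(LinearGrowth.translate x (LinearGrowth.length o) -
      LinearGrowth.const (displacement o x) : LinearGrowth G o) g| ≤ LinearGrowth.length o g := by
    have hback := displacement_mul_le o (x * g) g⁻¹
    rw [mul_inv_cancel_right, displacement_inv] at hback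
    simp only [LinearGrowth.sub_apply, LinearGrowth.translate_apply, LinearGrowth.length_apply,
      LinearGrowth.const_apply, abs_le]
    constructor <;> linarith [displacement_mul_le o x g]
  simpa [smul_sub, smul_translate, smul_const, mass_eq_one hκ, smul_length_one] using
    abs_smul_growth_le hκ.1 hincrement 1

lemma abs_mul_smul_length_sub_le {κ τ : FiniteMoment G o} (hκ : IsProbMeasure κ)
    (hτ : IsProbMeasure τ) (x : G) : |((κ * τ) • (LinearGrowth.length o : LinearGrowth G o)) x -
      (κ • (LinearGrowth.length o : LinearGrowth G o)) x| ≤ firstMoment o τ := by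
  have h := abs_smul_apply_le_of_isProbMeasure hκ
    (F := τ • LinearGrowth.length o - LinearGrowth.length o) (abs_smul_length_sub_le hτ) x
  rwa [smul_sub, ← mul_smul] at h

end FiniteMoment

end ProbabilityMeasures

section Deviation

variable {G X : Type*} [Group G] [MetricSpace X] [MulAction G X] [IsIsometricSMul G X] {o : X}

namespace LinearGrowth

/-- The function `g ↦ 2 ⟨x⁻¹ o, g o⟩`, the defect of additivity of the displacement in the
product `x * g`. -/
noncomputable def defect (o : X) (x : G) : LinearGrowth G o :=
  const (displacement o x) + length o - translate x (length o)

lemma defect_apply (o : X) (x g : G) :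
    defect o x g = 2 * gromovProduct o (x⁻¹ • o) (g • o) := by
  have hdist : dist (x⁻¹ • o) (g • o) = displacement o (x * g) := by
    rw [← dist_smul x, smul_inv_smul, smul_smul, displacement]
  simp only [defect, sub_apply, add_apply, const_apply, length_apply, translate_apply,
    gromovProduct, hdist, ← displacement_inv o x]
  simp only [displacement]
  ring

lemma defect_nonneg (o : X) (x g : G) : 0 ≤ defect o x g := by
  simp only [defect, sub_apply, add_apply, const_apply, length_apply, translate_apply]
  linarith [displacement_mul_le o x g]

end LinearGrowth

namespace FiniteMoment

/-- For a random `g` of law `κ`, the expected defect `E (‖x‖ + ‖g‖ - ‖x g‖)`. -/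
noncomputable def deviation (κ : FiniteMoment G o) (x : G) : ℝ :=
  displacement o x + firstMoment o κ - (κ • (LinearGrowth.length o : LinearGrowth G o)) x

lemma deviation_eq_smul_defect {κ : FiniteMoment G o} (hκ : IsProbMeasure κ) (x : G) :
    deviation κ x = (κ • (LinearGrowth.defect o x : LinearGrowth G o)) 1 := by
  simp [deviation, LinearGrowth.defect, smul_sub, smul_translate, smul_const, mass_eq_one hκ,
    smul_length_one]

lemma deviation_nonneg {κ : FiniteMoment G o} (hκ : IsProbMeasure κ) (x : G) :
    0 ≤ deviation κ x := by
  rw [deviation_eq_smul_defect hκ]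
  exact tsum_nonneg fun g => mul_nonneg (hκ.1 g) (LinearGrowth.defect_nonneg o x _)

lemma deviation_mul_le {κ τ : FiniteMoment G o} (hκ : IsProbMeasure κ) (hτ : IsProbMeasure τ)
    (x : G) : deviation (κ * τ) x ≤ deviation κ x + 2 * firstMoment o τ := by
  have hone := abs_mul_smul_length_sub_le hκ hτ 1
  simp only [smul_length_one] at hone
  simp only [deviation]
  linarith [(abs_le.1 (abs_mul_smul_length_sub_le hκ hτ x)).1, (abs_le.1 hone).2]

lemma iterExp_ofReal {κ : FiniteMoment G o} (hκ : ∀ g, 0 ≤ κ g) (n : ℕ) {F : LinearGrowth G o}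
    (hF : ∀ x, 0 ≤ F x) :
    iterExp (fun g => ENNReal.ofReal (κ g)) n (fun l => ENNReal.ofReal (F (wordProd l))) =
      ENNReal.ofReal ((κ ^ n • F) 1) := by
  induction n generalizing F with
  | zero => simp [iterExp]
  | succ n ih =>
    have hstep (x : G) : ∑' g, ENNReal.ofReal (κ g) * ENNReal.ofReal (F (x * g)) =
        ENNReal.ofReal ((κ • F) x) := by
      simp only [← ENNReal.ofReal_mul (hκ _)]
      exact (ENNReal.ofReal_tsum_of_nonneg (fun g => mul_nonneg (hκ g) (hF _))
        (κ.summable_mul_comp_mul F x)).symm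
    have hκF (x : G) : 0 ≤ (κ • F) x := tsum_nonneg fun g => mul_nonneg (hκ g) (hF _)
    rw [pow_succ, mul_smul, ← ih hκF]
    simp only [iterExp, wordProd_cons, ← iterExp_const_mul, ← iterExp_tsum, hstep]

end FiniteMoment

end Deviation

lemma sum_ofReal_pow_le {α : ℝ} (hα : 0 < α) (hα1 : α ≤ 1) (n : ℕ) :
    ∑ j ∈ Finset.range n, ENNReal.ofReal (1 - α) ^ j ≤ ENNReal.ofReal α⁻¹ := by
  have hgeom : ∑ j ∈ Finset.range n, (1 - α) ^ j ≤ α⁻¹ := by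
    simpa using (summable_geometric_of_lt_one (sub_nonneg.2 hα1) (sub_lt_self 1 hα)).sum_le_tsum
      (Finset.range n) (fun j _ => pow_nonneg (sub_nonneg.2 hα1) j) |>.trans_eq
      (tsum_geometric_of_lt_one (sub_nonneg.2 hα1) (sub_lt_self 1 hα))
  simp only [← ENNReal.ofReal_pow (sub_nonneg.2 hα1)]
  rw [← ENNReal.ofReal_sum_of_nonneg fun j _ => pow_nonneg (sub_nonneg.2 hα1) j]
  exact ENNReal.ofReal_le_ofReal hgeom

section UniformDeviation

variable {G X : Type*} [Group G] [MetricSpace X] [MulAction G X] [IsIsometricSMul G X] {o : X}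

namespace FiniteMoment

lemma tsum_ofReal_mul_displacement {κ : FiniteMoment G o} (hκ : ∀ g, 0 ≤ κ g) :
    ∑' g, ENNReal.ofReal (κ g) * ENNReal.ofReal (2 * displacement o g) =
      ENNReal.ofReal (2 * firstMoment o κ) := by
  have hterm (g : G) : ENNReal.ofReal (κ g) * ENNReal.ofReal (2 * displacement o g) =
      ENNReal.ofReal (2 * (κ g * displacement o g)) := by
    rw [← ENNReal.ofReal_mul (hκ g), mul_left_comm]
  have hsum : Summable fun g => κ g * displacement o g := by
    simpa using κ.summable_mul_comp_mul (LinearGrowth.length o) 1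
  rw [tsum_congr hterm, ← ENNReal.ofReal_tsum_of_nonneg
    (fun g => mul_nonneg zero_le_two (mul_nonneg (hκ g) (displacement_nonneg o g)))
    (hsum.mul_left 2), tsum_mul_left]
  rfl

lemma ofReal_deviation_pow {κ : FiniteMoment G o} (hκ : IsProbMeasure κ) (n : ℕ) (x : G) :
    ENNReal.ofReal (deviation (κ ^ n) x) = 2 * iterExp (fun g => ENNReal.ofReal (κ g)) n
      fun l => ENNReal.ofReal (gromovProduct o (x⁻¹ • o) (wordProd l • o)) := by
  rw [deviation_eq_smul_defect (isProbMeasure_pow hκ n), ← iterExp_ofReal hκ.1 n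
    (LinearGrowth.defect_nonneg o x), ← iterExp_const_mul]
  simp only [LinearGrowth.defect_apply, ENNReal.ofReal_mul zero_le_two, ENNReal.ofReal_ofNat]

lemma deviation_pow_le_of_isPingPong {β : X → ℝ} {s : Fin 16 → G} {p q : Fin 16 → ℝ}
    {r A E W α : ℝ} (hs : IsPingPong β s p q r (2 * E)) (hW : ∀ i, |q i| + r ≤ W) (hA : 0 ≤ A)
    (hE : 0 ≤ E) (hβ : ∀ y z : X, A < gromovProduct o y z → |β y| ≤ W + E → |β y - β z| ≤ E)
    {κ : FiniteMoment G o} (hκ : IsProbMeasure κ) (hα : 0 < α) (hletters : ∀ i, 16 * α ≤ κ (s i))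
    (n : ℕ) (x : G) :
    deviation (κ ^ n) x ≤ 2 * (A + 2 * firstMoment o κ * (8 * α)⁻¹) := by
  have hα1 : 8 * α ≤ 1 := by
    have hle : κ (s 0) ≤ 1 := (hκ.2.1.le_tsum (s 0) fun g _ => hκ.1 g).trans_eq hκ.2.2
    linarith [hletters 0]
  have hmoment := firstMoment_nonneg hκ
  have hρ : 1 + 2 * (4 : ℕ) * ENNReal.ofReal α ≤
      ENNReal.ofReal (1 - 8 * α) + (4 : ℕ) ^ 2 * ENNReal.ofReal α := by
    rw [← ENNReal.ofReal_one, ← ENNReal.ofReal_natCast, ← ENNReal.ofReal_ofNat 2,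
      ← ENNReal.ofReal_pow (by positivity), ← ENNReal.ofReal_mul (by positivity),
      ← ENNReal.ofReal_mul (by positivity), ← ENNReal.ofReal_mul (by positivity),
      ← ENNReal.ofReal_add (by positivity) (by positivity),
      ← ENNReal.ofReal_add (by linarith) (by positivity)]
    exact ENNReal.ofReal_le_ofReal (by norm_num; linarith)
  have hL2 := hs.coherentL2Bound (o := o) (y := x⁻¹ • o) hW (m := 4) (by simp)
    (κ := fun g => ENNReal.ofReal (κ g)) ENNReal.ofReal_ne_top (tsum_ofReal hκ).le (fun i => by
      simpa [ENNReal.ofReal_mul, (by norm_num : (4 : ENNReal) ^ 2 = 16)]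
        using ENNReal.ofReal_le_ofReal (hletters i)) hρ
  have hgromov := iterExp_gromovProduct_le hA hE hβ (tsum_ofReal hκ).le hL2 n
  rw [tsum_ofReal_mul_displacement hκ.1] at hgromov
  refine (ENNReal.ofReal_le_ofReal_iff (by positivity)).1 ?_
  rw [ofReal_deviation_pow hκ, ENNReal.ofReal_mul zero_le_two, ENNReal.ofReal_ofNat,
    ENNReal.ofReal_add hA (by positivity), ENNReal.ofReal_mul (by positivity)]
  gcongr
  refine hgromov.trans ?_
  gcongr
  exact sum_ofReal_pow_le (by positivity) hα1 n

lemma exists_isPingPong_pow_apply_pos (hgeo : IsGeodesicSpace X) {μ : FiniteMoment G o}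
    (hμ : IsProbMeasure μ) (hne : NonElementary o μ) :
    ∃ (N : ℕ) (β : X → ℝ) (s : Fin 16 → G) (p q : Fin 16 → ℝ) (r A E W : ℝ), 0 < N ∧
      IsPingPong β s p q r (2 * E) ∧ (∀ i, |q i| + r ≤ W) ∧ 0 ≤ A ∧ 0 ≤ E ∧
      (∀ y z : X, A < gromovProduct o y z → |β y| ≤ W + E → |β y - β z| ≤ E) ∧
      ∀ i, 0 < (μ ^ N) (s i) := by
  obtain ⟨a, b, ha, hb, hab⟩ := hne
  obtain ⟨β, E, c, L, hcoarse, hshift, hturn⟩ := hab.exists_coordinate hgeo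
  have hE : 0 ≤ E := (abs_nonneg _).trans (hshift 0 o)
  obtain ⟨k, hk⟩ := exists_nat_gt (max 0 (2 * (c + E) + 2 * E))
  obtain ⟨hk0, hk⟩ := max_lt_iff.1 hk
  obtain ⟨A, hA⟩ := hcoarse (k * 15 + (c + E) + E)
  obtain ⟨na, -, hna⟩ := exists_pow_apply_pos hμ ha
  obtain ⟨nb, hnb0, hnb⟩ := exists_pow_apply_pos hμ hb
  refine ⟨k * 15 * nb + L * na, β, _, _, _, c + E, max A 0, E, k * 15 + (c + E), ?_,
    isPingPong_letters (N := 16) hshift hturn (by positivity) hk, fun i => ?_, le_max_right _ _, hE,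
    fun y z hyz => hA y z ((le_max_left _ _).trans_lt hyz), fun i => ?_⟩
  · exact Nat.add_pos_left (Nat.mul_pos (Nat.mul_pos (by exact_mod_cast hk0) (by simp)) hnb0) _
  · rw [abs_neg, abs_of_nonneg (by positivity)]
    gcongr
    exact_mod_cast Nat.le_of_lt_succ i.rev.is_lt
  · have hrev : (i : ℕ) + i.rev = 15 := by rw [Fin.val_rev]; lia
    convert pow_add_apply_pos hμ (pow_add_apply_pos hμ (pow_mul_apply_pos hμ hnb (k * i))
      (pow_mul_apply_pos hμ hna L)) (pow_mul_apply_pos hμ hnb (k * i.rev)) using 3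
    rw [← hrev]
    ring

/-- The expected defect of every power of `κ` is at most `C`. -/
def HasDeviationBound (κ : FiniteMoment G o) (C : ℝ) : Prop :=
  ∀ (n : ℕ) (x : G), deviation (κ ^ n) x ≤ C

lemma HasDeviationBound.of_pow {κ : FiniteMoment G o} (hκ : IsProbMeasure κ) {N : ℕ} (hN : 0 < N)
    {C M : ℝ} (hC : HasDeviationBound (κ ^ N) C) (hM : ∀ r < N, ‖κ ^ r‖ ≤ M) :
    HasDeviationBound κ (C + 2 * M) := fun n x => by
  have hr := Nat.mod_lt n hN
  rw [← Nat.div_add_mod n N, pow_add, pow_mul]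
  refine (deviation_mul_le (isProbMeasure_pow (isProbMeasure_pow hκ N) _)
    (isProbMeasure_pow hκ _) x).trans ?_
  gcongr
  · exact hC _ x
  · exact (firstMoment_le_norm _).trans (hM _ hr)

theorem eventually_hasDeviationBound (hgeo : IsGeodesicSpace X) {μ : FiniteMoment G o}
    (hμ : IsProbMeasure μ) (hne : NonElementary o μ) :
    ∃ C, ∀ᶠ κ : FiniteMoment G o in 𝓝 μ, IsProbMeasure κ → HasDeviationBound κ C := by
  obtain ⟨N, β, s, p, q, r, A, E, W, hN, hs, hW, hA, hE, hβ, hpos⟩ :=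
    exists_isPingPong_pow_apply_pos hgeo hμ hne
  obtain ⟨i₀, hi₀⟩ := Finite.exists_min fun i => (μ ^ N) (s i)
  set α := (μ ^ N) (s i₀) / 32 with hα
  have hα0 : 0 < α := div_pos (hpos i₀) (by norm_num)
  have hletters : ∀ᶠ κ : FiniteMoment G o in 𝓝 μ, ∀ i, 16 * α < (κ ^ N) (s i) :=
    eventually_all.2 fun i =>
      ((continuous_apply (s i)).comp (continuous_pow N)).continuousAt.eventually
        (lt_mem_nhds (by simp only [Function.comp]; linarith [hi₀ i, hpos i₀]))
  have hnorm (r : ℕ) : ∀ᶠ κ : FiniteMoment G o in 𝓝 μ, ‖κ ^ r‖ < ‖μ ^ r‖ + 1 :=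
    (continuous_pow r).norm.continuousAt.eventually (gt_mem_nhds (lt_add_one _))
  set M := ∑ r ∈ Finset.range (N + 1), (‖μ ^ r‖ + 1)
  have hM : ∀ᶠ κ : FiniteMoment G o in 𝓝 μ, ∀ r ∈ Finset.range (N + 1), ‖κ ^ r‖ ≤ M := by
    refine (Finset.eventually_all _).2 fun r hr => (hnorm r).mono fun κ hκ => hκ.le.trans ?_
    exact Finset.single_le_sum (f := fun r => ‖μ ^ r‖ + 1) (fun _ _ => by positivity) hr
  refine ⟨2 * (A + 2 * M * (8 * α)⁻¹) + 2 * M, ?_⟩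
  filter_upwards [hletters, hM] with κ hκ_letters hκM hκ
  refine .of_pow hκ hN (fun n x => ?_) fun r hr => hκM r (Finset.mem_range.2 (by lia))
  refine (deviation_pow_le_of_isPingPong hs hW hA hE hβ (isProbMeasure_pow hκ N) hα0
    (fun i => (hκ_letters i).le) n x).trans ?_
  gcongr
  exact (firstMoment_le_norm _).trans (hκM N (Finset.self_mem_range_succ N))

end FiniteMoment

end UniformDeviation

section SandwichSum

variable {R : Type*}

/-- The sum `∑_{i + j = n - 1} a^i z b^j`; for `a = b` it is the derivative of `a ↦ a^n` in the
direction `z`. -/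
def sandwichSum [Semiring R] (a z b : R) (n : ℕ) : R :=
  ∑ i ∈ Finset.range n, a ^ i * z * b ^ (n - 1 - i)

@[simp] lemma sandwichSum_zero [Semiring R] (a z b : R) : sandwichSum a z b 0 = 0 :=
  Finset.sum_range_zero _

lemma sandwichSum_succ [Semiring R] (a z b : R) (n : ℕ) :
    sandwichSum a z b (n + 1) = sandwichSum a z b n * b + a ^ n * z := by
  simp only [sandwichSum, Finset.sum_range_succ, Finset.sum_mul, Nat.add_sub_cancel,
    Nat.sub_self, pow_zero, mul_one]
  refine congrArg (· + _) (Finset.sum_congr rfl fun i hi => ?_)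
  rw [mul_assoc _ _ b, ← pow_succ]
  congr 2
  have := Finset.mem_range.1 hi
  lia

lemma sandwichSum_succ' [Semiring R] (a z b : R) (n : ℕ) :
    sandwichSum a z b (n + 1) = a * sandwichSum a z b n + z * b ^ n := by
  induction n with
  | zero => simp [sandwichSum_succ]
  | succ n ih =>
    calc sandwichSum a z b (n + 2)
        = (a * sandwichSum a z b n + z * b ^ n) * b + a ^ (n + 1) * z := by
          rw [sandwichSum_succ, ih]
      _ = a * (sandwichSum a z b n * b + a ^ n * z) + z * b ^ (n + 1) := by
          rw [pow_succ' a, pow_succ b]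
          noncomm_ring
      _ = a * sandwichSum a z b (n + 1) + z * b ^ (n + 1) := by rw [sandwichSum_succ]

lemma pow_sub_pow_eq_sandwichSum [Ring R] (a b : R) (n : ℕ) :
    a ^ n - b ^ n = sandwichSum a (a - b) b n := by
  induction n with
  | zero => simp
  | succ n ih => rw [sandwichSum_succ, ← ih, pow_succ, pow_succ]; noncomm_ring

lemma sandwichSum_sub [Ring R] (a z w b : R) (n : ℕ) :
    sandwichSum a (z - w) b n = sandwichSum a z b n - sandwichSum a w b n := by
  simp only [sandwichSum, mul_sub, sub_mul, Finset.sum_sub_distrib]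

lemma add_smul_pow_eq_sandwichSum [Ring R] [Algebra ℝ R] (p z : R) (t : ℝ) (n : ℕ) :
    (p + t • z) ^ n = p ^ n + t • sandwichSum p z p n + t ^ 2 •
      ∑ j ∈ Finset.range n, sandwichSum p z p j * z * (p + t • z) ^ (n - 1 - j) := by
  induction n with
  | zero => simp
  | succ n ih =>
    have hshift : ∑ j ∈ Finset.range n, sandwichSum p z p j * z * (p + t • z) ^ (n - j) =
        (∑ j ∈ Finset.range n, sandwichSum p z p j * z * (p + t • z) ^ (n - 1 - j)) *
          (p + t • z) := by
      rw [Finset.sum_mul]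
      refine Finset.sum_congr rfl fun j hj => ?_
      have := Finset.mem_range.1 hj
      rw [mul_assoc _ _ (p + t • z), ← pow_succ]
      congr 2
      lia
    rw [Finset.sum_range_succ, Nat.add_sub_cancel, hshift, Nat.sub_self, pow_zero, mul_one,
      pow_succ (p + t • z), ih, sandwichSum_succ, pow_succ p]
    simp only [add_mul, mul_add, smul_add, smul_mul_assoc, mul_smul_comm, smul_smul]
    rw [← sq, mul_comm t (t ^ 2)]
    abel

end SandwichSum

section RealAnalysis

lemma abs_sub_mul_iInf_div_le {u : ℕ → ℝ} {C : ℝ} (hu : ∀ n, 0 ≤ u n)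
    (hsub : Subadditive u) (hsuper : ∀ m n, u m + u n - C ≤ u (m + n)) {n : ℕ} (hn : 0 < n) :
    |u n - n * ⨅ k : ℕ, u (k + 1) / (k + 1 : ℝ)| ≤ C := by
  have hsuper' : Subadditive fun m => C - u m := fun a b => by linarith [hsuper a b]
  have hn0 : (0 : ℝ) < n := Nat.cast_pos.2 hn
  have hbdd : BddBelow (Set.range fun k : ℕ => u (k + 1) / (k + 1 : ℝ)) :=
    ⟨0, by rintro _ ⟨k, rfl⟩; exact div_nonneg (hu _) (by positivity)⟩
  have hupper : ⨅ k : ℕ, u (k + 1) / (k + 1 : ℝ) ≤ u n / n := by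
    obtain ⟨k, rfl⟩ := Nat.exists_eq_add_of_lt hn
    simpa using ciInf_le hbdd k
  have hlower : (u n - C) / n ≤ ⨅ k : ℕ, u (k + 1) / (k + 1 : ℝ) := by
    refine le_ciInf fun k => ?_
    rw [div_le_div_iff₀ hn0 (by positivity)]
    have hmul := hsub.apply_mul_add_le n (k + 1) 0
    have hmul' := hsuper'.apply_mul_add_le (k + 1) n 0
    rw [mul_comm (k + 1) n] at hmul'
    push_cast at hmul'
    linarith
  rw [le_div_iff₀ hn0] at hupper
  rw [div_le_iff₀ hn0] at hlower
  exact abs_le.2 ⟨by linarith, by linarith⟩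

variable {α : Type*} [PseudoMetricSpace α]

lemma cauchySeq_of_forall_exists_dist_le {u : ℕ → α}
    (h : ∀ ε > 0, ∃ v : ℕ → α, CauchySeq v ∧ ∀ᶠ n in atTop, dist (u n) (v n) ≤ ε) :
    CauchySeq u := by
  refine Metric.cauchySeq_iff.2 fun ε hε => ?_
  obtain ⟨v, hv, huv⟩ := h (ε / 4) (by positivity)
  obtain ⟨N, hN⟩ := Metric.cauchySeq_iff.1 hv (ε / 4) (by positivity)
  obtain ⟨N', hN'⟩ := eventually_atTop.1 huv
  refine ⟨max N N', fun m hm n hn => ?_⟩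
  have hmn := hN m ((le_max_left _ _).trans hm) n ((le_max_left _ _).trans hn)
  have hum := hN' m ((le_max_right _ _).trans hm)
  have hun := hN' n ((le_max_right _ _).trans hn)
  rw [dist_comm] at hun
  linarith [dist_triangle4 (u m) (v m) (v n) (u n)]

lemma cauchySeq_of_dist_le_geometric_on_blocks {u q : ℕ → α} {b : ℕ} (hb : 1 < b) {A r : ℝ}
    (hr0 : 0 ≤ r) (hr1 : r < 1) (h : ∀ᶠ j in atTop, ∀ n, b ^ j ≤ n → n ≤ b ^ (j + 1) →
      dist (q j) (u n) ≤ A * r ^ j) : CauchySeq u := by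
  have hq : CauchySeq q := by
    refine cauchySeq_of_summable_dist <| .of_norm_bounded_eventually_nat (g := fun j =>
      A * r ^ j + A * r ^ (j + 1)) ?_ ?_
    · have hgeom := (summable_geometric_of_lt_one hr0 hr1).mul_left A
      exact hgeom.add ((summable_nat_add_iff 1).2 hgeom)
    · filter_upwards [h, (tendsto_add_atTop_nat 1).eventually h] with j hj hj'
      rw [Real.norm_of_nonneg dist_nonneg]
      have hmono : b ^ j ≤ b ^ (j + 1) := Nat.pow_le_pow_right hb.le j.le_succ
      exact (dist_triangle_right _ _ (u (b ^ (j + 1)))).trans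
        (add_le_add (hj _ hmono le_rfl)
          (hj' _ le_rfl (Nat.pow_le_pow_right hb.le (j + 1).le_succ)))
  have hlog : Tendsto (Nat.log b) atTop atTop :=
    Nat.log_monotone.tendsto_atTop_atTop fun j => ⟨b ^ j, (Nat.log_pow hb j).ge⟩
  have hgeom := ((tendsto_pow_atTop_nhds_zero_of_lt_one hr0 hr1).const_mul A).comp hlog
  rw [mul_zero] at hgeom
  refine cauchySeq_of_forall_exists_dist_le fun ε hε => ⟨q ∘ Nat.log b, hq.comp_tendsto hlog, ?_⟩
  filter_upwards [hlog.eventually h, eventually_ne_atTop 0, hgeom.eventually (gt_mem_nhds hε)]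
    with n hn hn0 hnε
  rw [dist_comm]
  exact (hn n (Nat.pow_log_le_self b hn0) (Nat.lt_pow_succ_log_self hb n).le).trans hnε.le

lemma cauchySeq_of_dist_le_div_add_mul_sqrt {s : ℝ → α} {u : ℕ → α} {C K : ℝ} (hC : 0 ≤ C)
    (hK : 0 ≤ K)
    (h : ∀ᶠ t in 𝓝[≠] 0, ∀ n : ℕ, 0 < n → dist (s t) (u n) ≤ C / (n * |t|) + K * |t| * √n) :
    CauchySeq u := by
  have hstep : Tendsto (fun j : ℕ => ((8 : ℝ) ^ j)⁻¹) atTop (𝓝[≠] 0) := by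
    simp only [← inv_pow]
    exact tendsto_nhdsWithin_iff.2 ⟨tendsto_pow_atTop_nhds_zero_of_lt_one (by norm_num)
      (by norm_num), .of_forall fun j => by simp⟩
  refine cauchySeq_of_dist_le_geometric_on_blocks (q := fun j => s ((8 : ℝ) ^ j)⁻¹)
    (b := 16) (A := C + 4 * K) (r := 2⁻¹) (by norm_num) (by norm_num) (by norm_num) ?_
  filter_upwards [hstep.eventually h] with j hj n hn hn'
  have hlower : (16 : ℝ) ^ j ≤ n := by exact_mod_cast hn
  have hsqrt : √n ≤ 4 * 4 ^ j := by
    rw [Real.sqrt_le_left (by positivity), ← pow_succ', ← pow_mul, mul_comm, pow_mul]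
    norm_num
    exact_mod_cast hn'
  have h2 : (2⁻¹ : ℝ) ^ j = 8 ^ j / 16 ^ j := by rw [← div_pow]; norm_num
  have h2' : (2⁻¹ : ℝ) ^ j = (8 ^ j)⁻¹ * 4 ^ j := by rw [← inv_pow, ← mul_pow]; norm_num
  refine (hj n ((pow_pos (by norm_num) j).trans_le hn)).trans ?_
  rw [abs_of_pos (by positivity), add_mul]
  refine add_le_add ?_ ?_
  · calc C / (n * (8 ^ j)⁻¹) ≤ C / (16 ^ j * (8 ^ j)⁻¹) := by gcongr
      _ = C * 2⁻¹ ^ j := by rw [h2]; field_simp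
  · calc K * (8 ^ j)⁻¹ * √n ≤ K * (8 ^ j)⁻¹ * (4 * 4 ^ j) := by gcongr
      _ = 4 * K * 2⁻¹ ^ j := by rw [h2']; ring

lemma tendsto_of_dist_le_div_add_mul_sqrt {s : ℝ → α} {u : ℕ → α} {a : α} {C : ℝ} (hC : 0 ≤ C)
    (hu : Tendsto u atTop (𝓝 a))
    (h : ∀ ε > 0, ∃ K, ∀ᶠ t in 𝓝[≠] 0, ∀ n : ℕ, 0 < n →
      dist (s t) (u n) ≤ C / (n * |t|) + ε + K * |t| * √n) : Tendsto s (𝓝[≠] 0) (𝓝 a) := by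
  refine Metric.tendsto_nhds.2 fun c hc => ?_
  set ε := c / (C + 4) with hε
  have hε0 : 0 < ε := by positivity
  obtain ⟨K, hK⟩ := h ε hε0
  have habs : Tendsto (fun t : ℝ => |t|) (𝓝[≠] 0) (𝓝[>] 0) := tendsto_abs_nhdsNE_zero
  have hscale : Tendsto (fun t : ℝ => ⌈(ε * |t|)⁻¹⌉₊) (𝓝[≠] 0) atTop := by
    simp only [mul_inv]
    exact tendsto_nat_ceil_atTop.comp
      ((tendsto_inv_nhdsGT_zero.comp habs).const_mul_atTop (inv_pos.2 hε0))
  have hsqrt : Tendsto (fun t : ℝ => |K| * √(|t| * (ε⁻¹ + |t|))) (𝓝[≠] 0) (𝓝 0) := by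
    have : Continuous fun t : ℝ => |K| * √(|t| * (ε⁻¹ + |t|)) := by fun_prop
    simpa using (this.tendsto 0).mono_left nhdsWithin_le_nhds
  filter_upwards [hK, hscale.eventually (eventually_gt_atTop 0), self_mem_nhdsWithin,
    hscale.eventually (Metric.tendsto_nhds.1 hu ε hε0),
    hsqrt.eventually (gt_mem_nhds hε0)] with t ht hn ht0 hut hsqrt
  have ht0 : 0 < |t| := abs_pos.2 ht0
  set n := ⌈(ε * |t|)⁻¹⌉₊
  have : (0 : ℝ) < n := Nat.cast_pos.2 hn
  have hfirst : C / (n * |t|) ≤ C * ε := by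
    have hceil : (ε * |t|)⁻¹ ≤ n := Nat.le_ceil _
    rw [inv_le_iff_one_le_mul₀ (by positivity)] at hceil
    rw [div_le_iff₀ (by positivity)]
    nlinarith
  have hlast : |t| * √n = √(|t| * (|t| * n)) := by
    rw [← mul_assoc, Real.sqrt_mul (by positivity), Real.sqrt_mul_self ht0.le]
  have hceil : |t| * n ≤ ε⁻¹ + |t| := by
    have := (Nat.ceil_lt_add_one (a := (ε * |t|)⁻¹) (by positivity)).le
    calc |t| * n ≤ |t| * ((ε * |t|)⁻¹ + 1) := by gcongr
      _ = ε⁻¹ + |t| := by field_simp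
  have hKn : K * |t| * √n ≤ |K| * √(|t| * (ε⁻¹ + |t|)) := by
    rw [mul_assoc, hlast]
    gcongr
    exact le_abs_self K
  calc dist (s t) a ≤ dist (s t) (u n) + dist (u n) a := dist_triangle _ _ _
    _ < C * ε + ε + ε + ε := by linarith [ht n hn]
    _ < (C + 4) * ε := by linarith
    _ = c := by rw [hε]; field_simp

end RealAnalysis

section EscapeRate

variable {G X : Type*} [Group G] [MetricSpace X] [MulAction G X] [IsIsometricSMul G X] {o : X}

namespace FiniteMoment

lemma firstMoment_mul_le {κ τ : FiniteMoment G o} (hκ : IsProbMeasure κ) (hτ : IsProbMeasure τ) :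
    firstMoment o (κ * τ) ≤ firstMoment o κ + firstMoment o τ := by
  have h := (abs_le.1 (abs_mul_smul_length_sub_le hκ hτ 1)).2
  rw [smul_length_one, smul_length_one] at h
  linarith

lemma firstMoment_add_sub_le {κ τ : FiniteMoment G o} (hκ : IsProbMeasure κ) {C : ℝ}
    (hC : ∀ x, deviation τ x ≤ C) :
    firstMoment o κ + firstMoment o τ - C ≤ firstMoment o (κ * τ) := by
  have hlower (x : G) : (LinearGrowth.length o + LinearGrowth.const (firstMoment o τ - C) :
      LinearGrowth G o) x ≤ (τ • (LinearGrowth.length o : LinearGrowth G o)) x := by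
    have hx := hC x
    rw [deviation] at hx
    rw [LinearGrowth.add_apply, LinearGrowth.const_apply, LinearGrowth.length_apply]
    linarith
  have h := smul_growth_mono hκ.1 hlower 1
  rw [smul_add, smul_const, mass_eq_one hκ, ← mul_smul, LinearGrowth.add_apply,
    LinearGrowth.const_apply, smul_length_one, smul_length_one] at h
  linarith

lemma HasDeviationBound.abs_firstMoment_pow_sub_le {κ : FiniteMoment G o} {C : ℝ}
    (hC : HasDeviationBound κ C) (hκ : IsProbMeasure κ) {n : ℕ} (hn : 0 < n) :
    |firstMoment o (κ ^ n) - n * escapeRate o κ| ≤ C := by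
  have hsub (m n : ℕ) :
      firstMoment o (κ ^ (m + n)) ≤ firstMoment o (κ ^ m) + firstMoment o (κ ^ n) := by
    rw [pow_add]
    exact firstMoment_mul_le (isProbMeasure_pow hκ m) (isProbMeasure_pow hκ n)
  have hsuper (m n : ℕ) :
      firstMoment o (κ ^ m) + firstMoment o (κ ^ n) - C ≤ firstMoment o (κ ^ (m + n)) := by
    rw [pow_add]
    exact firstMoment_add_sub_le (isProbMeasure_pow hκ m) (hC n)
  simp only [escapeRate, ← coe_pow]
  exact abs_sub_mul_iInf_div_le (u := fun n => firstMoment o (κ ^ n))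
    (fun n => firstMoment_nonneg (isProbMeasure_pow hκ n)) hsub hsuper hn

lemma HasDeviationBound.nonneg {κ : FiniteMoment G o} {C : ℝ} (hC : HasDeviationBound κ C)
    (hκ : IsProbMeasure κ) : 0 ≤ C :=
  (deviation_nonneg (isProbMeasure_pow hκ 0) 1).trans (hC 0 1)

end FiniteMoment

end EscapeRate

section Expansion

variable {G X : Type*} [Group G] [MetricSpace X] [MulAction G X] [IsIsometricSMul G X] {o : X}

namespace FiniteMoment

lemma abs_smul_smul_length_le {ζ τ : FiniteMoment G o} (hζ : mass ζ = 0) (hτ : IsProbMeasure τ)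
    {C : ℝ} (hC : ∀ x, deviation τ x ≤ C) (x : G) :
    |(ζ • τ • (LinearGrowth.length o : LinearGrowth G o)) x| ≤ (1 + C) * ‖ζ‖ := by
  set Φ : LinearGrowth G o := LinearGrowth.translate x (τ • LinearGrowth.length o) -
    LinearGrowth.const (displacement o x + firstMoment o τ) with hΦ
  have hcentre : (ζ • τ • (LinearGrowth.length o : LinearGrowth G o)) x = (ζ • Φ) 1 := by
    simp [hΦ, smul_sub, smul_translate, smul_const, hζ]
  have hC0 : 0 ≤ C := (deviation_nonneg hτ x).trans (hC x)
  have hincrement (h : G) : |Φ h| ≤ (1 + C) * weight o h := by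
    have hdev : Φ h = displacement o (x * h) - displacement o x - deviation τ (x * h) := by
      simp only [hΦ, deviation, LinearGrowth.sub_apply, LinearGrowth.translate_apply,
        LinearGrowth.const_apply]
      ring
    have hback := displacement_mul_le o (x * h) h⁻¹
    rw [mul_inv_cancel_right, displacement_inv] at hback
    have hforth := displacement_mul_le o x h
    have hdev0 := deviation_nonneg hτ (x * h)
    have hdevC := hC (x * h)
    have hweight : displacement o h + C ≤ (1 + C) * weight o h := by
      rw [weight]
      nlinarith [mul_nonneg hC0 (displacement_nonneg o h)]
    rw [hdev, abs_le]
    constructor <;> linarith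
  rw [hcentre, smul_growth_apply]
  exact ζ.abs_tsum_mul_le fun h => by simpa only [one_mul] using hincrement h

lemma abs_sandwichSum_smul_le {κ ζ τ : FiniteMoment G o} (hκ : IsProbMeasure κ)
    {F : LinearGrowth G o} {B : ℝ} (hB : ∀ (j : ℕ) (x : G), |(ζ • τ ^ j • F) x| ≤ B) (n : ℕ)
    (x : G) : |(sandwichSum κ ζ τ n • F) x| ≤ n * B := by
  induction n generalizing x with
  | zero => simp
  | succ n ih =>
    rw [sandwichSum_succ', add_smul, mul_smul, mul_smul, LinearGrowth.add_apply]
    push_cast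
    linarith [abs_add_le ((κ • sandwichSum κ ζ τ n • F) x) ((ζ • τ ^ n • F) x), hB n x,
      abs_smul_apply_le_of_isProbMeasure hκ ih x]

lemma HasDeviationBound.abs_smul_pow_smul_length_le {ζ τ : FiniteMoment G o} {C : ℝ}
    (hC : HasDeviationBound τ C) (hτ : IsProbMeasure τ) (hζ : mass ζ = 0) (j : ℕ) (x : G) :
    |(ζ • τ ^ j • (LinearGrowth.length o : LinearGrowth G o)) x| ≤ (1 + C) * ‖ζ‖ :=
  abs_smul_smul_length_le hζ (isProbMeasure_pow hτ j) (hC j) x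

lemma HasDeviationBound.abs_escapeRate_sub_le {κ τ : FiniteMoment G o} {C : ℝ}
    (hCκ : HasDeviationBound κ C) (hCτ : HasDeviationBound τ C) (hκ : IsProbMeasure κ)
    (hτ : IsProbMeasure τ) : |escapeRate o κ - escapeRate o τ| ≤ (1 + C) * ‖κ - τ‖ := by
  have hmass : mass (κ - τ) = 0 := by rw [map_sub, mass_eq_one hκ, mass_eq_one hτ, sub_self]
  have hpow (n : ℕ) :
      |firstMoment o (κ ^ n) - firstMoment o (τ ^ n)| ≤ n * ((1 + C) * ‖κ - τ‖) := by
    rw [← smul_length_one, ← smul_length_one, ← LinearGrowth.sub_apply,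
      ← sub_smul (κ ^ n) (τ ^ n) (LinearGrowth.length o : LinearGrowth G o),
      pow_sub_pow_eq_sandwichSum]
    exact abs_sandwichSum_smul_le hκ (hCτ.abs_smul_pow_smul_length_le hτ hmass) n 1
  have hlim : Tendsto (fun n : ℕ => (1 + C) * ‖κ - τ‖ + 2 * C / n) atTop
      (𝓝 ((1 + C) * ‖κ - τ‖)) := by
    simpa using (tendsto_const_div_atTop_nhds_zero_nat (2 * C)).const_add ((1 + C) * ‖κ - τ‖)
  refine ge_of_tendsto hlim ?_
  filter_upwards [eventually_gt_atTop 0] with n hn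
  have hn0 : (0 : ℝ) < n := Nat.cast_pos.2 hn
  have hκn := abs_le.1 (hCκ.abs_firstMoment_pow_sub_le hκ hn)
  have hτn := abs_le.1 (hCτ.abs_firstMoment_pow_sub_le hτ hn)
  have hn_pow := abs_le.1 (hpow n)
  rw [← mul_le_mul_iff_right₀ hn0, ← abs_of_pos hn0, ← abs_mul, abs_of_pos hn0, mul_add,
    mul_div_cancel₀ _ hn0.ne', abs_le]
  constructor <;> linarith

lemma quadratic_shift_nonneg {m e M B S P k : ℝ} (hm : 0 ≤ m) (he : |e| ≤ M * m) (l c : ℝ)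
    (h : ∀ c', 0 ≤ B ^ 2 * (l * l) + 2 * (S + c' * P) * l + (c' ^ 2 + k * M ^ 2)) :
    0 ≤ m * (B ^ 2 * (l * l) + c ^ 2 + (k + 1) * M ^ 2 + 2 * l * (S + c * P)) +
      e * (2 * c + 2 * l * P) := by
  obtain rfl | hm := hm.eq_or_lt
  · rw [mul_zero, abs_nonpos_iff] at he
    simp [he]
  · have hdensity : (e / m) ^ 2 ≤ M ^ 2 := by
      rw [← div_le_iff₀ hm, ← abs_of_pos hm, ← abs_div] at he
      exact sq_le_sq.2 (he.trans (le_abs_self M))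
    have he_eq : e = m * (e / m) := by field_simp
    calc 0 ≤ m * (B ^ 2 * (l * l) + 2 * (S + (c + e / m) * P) * l +
          ((c + e / m) ^ 2 + k * M ^ 2)) := mul_nonneg hm.le (h _)
      _ ≤ m * (B ^ 2 * (l * l) + c ^ 2 + (k + 1) * M ^ 2 + 2 * l * (S + c * P) +
          e / m * (2 * c + 2 * l * P)) := mul_le_mul_of_nonneg_left (by linarith) hm.le
      _ = _ := by rw [mul_add m, ← mul_assoc m, ← he_eq]

/-- Cauchy–Schwarz for `F (x X_k)` and the martingale `∑_{i ≤ k} f (g_i)`, where `g_i` are the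
increments of the `μ`-random walk `X_k` and `η = f μ`, is the nonnegativity of this quadratic form
in `l`. The shift `c` makes the induction on `k` work. -/
lemma quadratic_sandwichSum_nonneg {μ η : FiniteMoment G o} (hμ : IsProbMeasure μ)
    (hη : mass η = 0) {M : ℝ} (hM : ∀ g, |η g| ≤ M * μ g) {F : LinearGrowth G o} {B : ℝ}
    (hF : ∀ x, |F x| ≤ B) (k : ℕ) (x : G) (l c : ℝ) :
    0 ≤ B ^ 2 * (l * l) + 2 * (((sandwichSum μ η μ k + c • μ ^ k) • F) x) * l +
      (c ^ 2 + k * M ^ 2) := by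
  induction k generalizing x c with
  | zero =>
    have hB : F x ^ 2 ≤ B ^ 2 := sq_le_sq.2 ((hF x).trans (le_abs_self B))
    simp only [sandwichSum_zero, pow_zero, zero_add, smul_assoc, one_smul,
      LinearGrowth.smul_apply, Nat.cast_zero, zero_mul, add_zero]
    nlinarith [sq_nonneg (l * F x + c), mul_le_mul_of_nonneg_right hB (sq_nonneg l)]
  | succ k ih =>
    set P := μ ^ k • F
    set S := sandwichSum μ η μ k • F
    set A := B ^ 2 * (l * l) + c ^ 2 + (k + 1) * M ^ 2 with hA
    have hpointwise (h : G) : 0 ≤ μ h * (A + 2 * l * (S (x * h) + c * P (x * h))) +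
        η h * (2 * c + 2 * l * P (x * h)) :=
      quadratic_shift_nonneg (hμ.1 h) (hM h) l c fun c' => by
        simpa only [add_smul, smul_assoc, LinearGrowth.add_apply, LinearGrowth.smul_apply]
          using ih (x * h) c'
    have hsum : 0 ≤ (μ • (LinearGrowth.const A + (2 * l) • (S + c • P) : LinearGrowth G o) +
        η • (LinearGrowth.const (2 * c) + (2 * l) • P : LinearGrowth G o)) x := by
      rw [LinearGrowth.add_apply, smul_growth_apply, smul_growth_apply,
        ← (μ.summable_mul_comp_mul _ x).tsum_add (η.summable_mul_comp_mul _ x)]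
      exact tsum_nonneg hpointwise
    have hμP : (μ ^ (k + 1)) • F = μ • P := by rw [pow_succ', mul_smul]
    have hμS : sandwichSum μ η μ (k + 1) • F = μ • S + η • P := by
      rw [sandwichSum_succ', add_smul, mul_smul, mul_smul]
    simp only [smul_add, smul_const, mass_eq_one hμ, hη, smul_comm μ, smul_comm η,
      LinearGrowth.add_apply, LinearGrowth.smul_apply, LinearGrowth.const_apply] at hsum
    rw [add_smul, smul_assoc, hμP, hμS]
    simp only [LinearGrowth.add_apply, LinearGrowth.smul_apply]
    push_cast
    rw [hA] at hsum
    linarith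

lemma abs_sandwichSum_smul_le_sqrt {μ η : FiniteMoment G o} (hμ : IsProbMeasure μ)
    (hη : mass η = 0) {M : ℝ} (hM0 : 0 ≤ M) (hM : ∀ g, |η g| ≤ M * μ g) {F : LinearGrowth G o}
    {B : ℝ} (hF : ∀ x, |F x| ≤ B) (k : ℕ) (x : G) :
    |(sandwichSum μ η μ k • F) x| ≤ M * √k * B := by
  have hdiscrim := discrim_le_zero fun l => by
    simpa using quadratic_sandwichSum_nonneg hμ hη hM hF k x l 0
  have hB : 0 ≤ B := (abs_nonneg _).trans (hF x)
  rw [discrim] at hdiscrim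
  refine abs_le_of_sq_le_sq ?_ (by positivity)
  rw [mul_pow, mul_pow, Real.sq_sqrt k.cast_nonneg]
  linarith

end FiniteMoment

end Expansion

section MeanVariation

variable {G X : Type*} [Group G] [MetricSpace X] [MulAction G X] [IsIsometricSMul G X] {o : X}

namespace FiniteMoment

/-- The derivative of `κ ↦ L(κ^n) / n` at `μ` in the direction `η`. -/
noncomputable def meanVariation (μ η : FiniteMoment G o) (n : ℕ) : ℝ :=
  1 / (n : ℝ) * (sandwichSum μ η μ n • (LinearGrowth.length o : LinearGrowth G o)) 1

lemma meanVariation_eq_sum_conv (μ η : FiniteMoment G o) (n : ℕ) :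
    meanVariation μ η n = 1 / (n : ℝ) * ∑ i ∈ Finset.range n, ∑' g : G,
      conv (convPow μ i) (conv η (convPow μ (n - 1 - i))) g * dist o (g • o) := by
  simp only [meanVariation, sandwichSum, Finset.sum_smul, LinearGrowth.sum_apply, smul_length_one,
    mul_assoc, coe_mul, coe_pow, firstMoment]

lemma meanVariation_sub (μ η ζ : FiniteMoment G o) (n : ℕ) :
    meanVariation μ (η - ζ) n = meanVariation μ η n - meanVariation μ ζ n := by
  rw [meanVariation, sandwichSum_sub,
    sub_smul (sandwichSum μ η μ n) _ (LinearGrowth.length o : LinearGrowth G o),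
    LinearGrowth.sub_apply, mul_sub, meanVariation, meanVariation]

lemma HasDeviationBound.abs_meanVariation_le {μ ζ : FiniteMoment G o} {C : ℝ}
    (hC : HasDeviationBound μ C) (hμ : IsProbMeasure μ) (hζ : mass ζ = 0) {n : ℕ} (hn : 0 < n) :
    |meanVariation μ ζ n| ≤ (1 + C) * ‖ζ‖ := by
  have hn0 : (0 : ℝ) < n := Nat.cast_pos.2 hn
  rw [meanVariation, abs_mul, abs_of_pos (one_div_pos.2 hn0), one_div,
    inv_mul_le_iff₀ hn0]
  exact abs_sandwichSum_smul_le hμ (hC.abs_smul_pow_smul_length_le hμ hζ) n 1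

lemma HasDeviationBound.abs_firstMoment_add_smul_pow_sub_le {μ η : FiniteMoment G o} {C M t : ℝ}
    (hC : HasDeviationBound (μ + t • η) C) (hμ : IsProbMeasure μ)
    (hμt : IsProbMeasure (μ + t • η)) (hη : mass η = 0) (hM0 : 0 ≤ M)
    (hM : ∀ g, |η g| ≤ M * μ g) {n : ℕ} (hn : 0 < n) :
    |firstMoment o ((μ + t • η) ^ n) - firstMoment o (μ ^ n) - n * (t * meanVariation μ η n)| ≤
      n * (M * ((1 + C) * ‖η‖) * t ^ 2 * √n) := by
  have hn0 : (n : ℝ) ≠ 0 := (Nat.cast_pos.2 hn).ne'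
  set R := ∑ j ∈ Finset.range n, sandwichSum μ η μ j * η * (μ + t • η) ^ (n - 1 - j)
  have hremainder : firstMoment o ((μ + t • η) ^ n) - firstMoment o (μ ^ n) -
      n * (t * meanVariation μ η n) =
        t ^ 2 * (R • (LinearGrowth.length o : LinearGrowth G o)) 1 := by
    have h : n * (t * meanVariation μ η n) =
        t * (sandwichSum μ η μ n • (LinearGrowth.length o : LinearGrowth G o)) 1 := by
      rw [meanVariation]
      field_simp
    rw [← smul_length_one, ← smul_length_one, add_smul_pow_eq_sandwichSum, h, add_smul, add_smul,
      smul_assoc, smul_assoc]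
    simp only [LinearGrowth.add_apply, LinearGrowth.smul_apply]
    ring
  have hterm (j : ℕ) (hj : j ∈ Finset.range n) :
      |((sandwichSum μ η μ j * η * (μ + t • η) ^ (n - 1 - j)) •
        (LinearGrowth.length o : LinearGrowth G o)) 1| ≤ M * √n * ((1 + C) * ‖η‖) := by
    have hB := hC.abs_smul_pow_smul_length_le hμt hη (n - 1 - j)
    rw [mul_smul, mul_smul]
    refine (abs_sandwichSum_smul_le_sqrt hμ hη hM0 hM hB j 1).trans ?_
    have hB0 := (abs_nonneg _).trans (hB 1)
    have hjn : j ≤ n := (Finset.mem_range.1 hj).le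
    gcongr
  have hR : |(R • (LinearGrowth.length o : LinearGrowth G o)) 1| ≤
      n * (M * √n * ((1 + C) * ‖η‖)) := by
    rw [Finset.sum_smul, LinearGrowth.sum_apply]
    simpa using (Finset.abs_sum_le_sum_abs _ _).trans (Finset.sum_le_card_nsmul _ _ _ hterm)
  rw [hremainder, abs_mul, abs_of_nonneg (sq_nonneg t)]
  calc t ^ 2 * |(R • (LinearGrowth.length o : LinearGrowth G o)) 1|
      ≤ t ^ 2 * (n * (M * √n * ((1 + C) * ‖η‖))) := by gcongr
    _ = _ := by ring

lemma dist_slope_escapeRate_meanVariation_le {μ η : FiniteMoment G o} {C M t : ℝ}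
    (hC : HasDeviationBound μ C) (hCt : HasDeviationBound (μ + t • η) C) (hμ : IsProbMeasure μ)
    (hμt : IsProbMeasure (μ + t • η)) (hη : mass η = 0) (hM0 : 0 ≤ M)
    (hM : ∀ g, |η g| ≤ M * μ g) (ht : t ≠ 0) {n : ℕ} (hn : 0 < n) :
    dist (slope (fun s => escapeRate o (μ + s • η : FiniteMoment G o)) 0 t) (meanVariation μ η n) ≤
      2 * C / (n * |t|) + M * ((1 + C) * ‖η‖) * |t| * √n := by
  have hn0 : (0 : ℝ) < n := Nat.cast_pos.2 hn
  have : 0 < |t| := abs_pos.2 ht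
  have hslope : slope (fun s => escapeRate o (μ + s • η : FiniteMoment G o)) 0 t -
      meanVariation μ η n =
        (n * escapeRate o (μ + t • η : FiniteMoment G o) - n * escapeRate o μ -
          n * (t * meanVariation μ η n)) / (n * t) := by
    simp only [slope_def_field, zero_smul, add_zero, sub_zero]
    field_simp
  have hexpansion := abs_le.1 (hCt.abs_firstMoment_add_smul_pow_sub_le hμ hμt hη hM0 hM hn)
  have hμn := abs_le.1 (hC.abs_firstMoment_pow_sub_le hμ hn)
  have hμtn := abs_le.1 (hCt.abs_firstMoment_pow_sub_le hμt hn)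
  rw [Real.dist_eq, hslope, abs_div, abs_mul, abs_of_pos hn0, div_le_iff₀ (by positivity)]
  calc _ ≤ 2 * C + n * (M * ((1 + C) * ‖η‖) * |t| ^ 2 * √n) := by
        rw [sq_abs, abs_le]
        constructor <;> linarith
    _ = _ := by field_simp

end FiniteMoment

end MeanVariation

section DominatedDirections

variable {G X : Type*} [Group G] [MetricSpace X] [MulAction G X] {o : X}

namespace FiniteMoment

lemma isProbMeasure_add_smul {μ η : FiniteMoment G o} (hμ : IsProbMeasure μ) (hη : mass η = 0)
    {M t : ℝ} (hM : ∀ g, |η g| ≤ M * μ g) (ht : |t| * M ≤ 1) : IsProbMeasure (μ + t • η) := by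
  refine (isProbMeasure_iff _).2 ⟨fun g => ?_, by simp [mass_eq_one hμ, hη]⟩
  have htη : |t * η g| ≤ μ g := by
    rw [abs_mul]
    calc |t| * |η g| ≤ |t| * (M * μ g) := mul_le_mul_of_nonneg_left (hM g) (abs_nonneg t)
      _ = |t| * M * μ g := (mul_assoc _ _ _).symm
      _ ≤ μ g := mul_le_of_le_one_left (hμ.1 g) ht
  rw [add_apply, smul_apply]
  linarith [neg_abs_le (t * η g)]

lemma abs_mass_le_norm (η : FiniteMoment G o) : |mass η| ≤ ‖η‖ := by
  simpa [mass_apply] using η.abs_tsum_mul_le (Φ := fun _ => 1) (C := 1) (by simp [one_le_weight])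

/-- The restriction of a signed measure to a set. -/
noncomputable def restrict (η : FiniteMoment G o) (s : Set G) : FiniteMoment G o :=
  ⟨s.indicator η, by
    refine η.summable_weight_mul_abs.of_nonneg_of_le
      (fun g => mul_nonneg (weight_pos o g).le (abs_nonneg _)) fun g => ?_
    by_cases hg : g ∈ s <;> simp [hg, mul_nonneg, (weight_pos o g).le]⟩

lemma restrict_apply (η : FiniteMoment G o) (s : Set G) (g : G) :
    η.restrict s g = s.indicator η g := rfl

lemma exists_finset_norm_sub_restrict_le (η : FiniteMoment G o) {ε : ℝ} (hε : 0 < ε) :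
    ∃ s : Finset G, ‖η - η.restrict s‖ ≤ ε := by
  obtain ⟨s, hs⟩ := ((tendsto_tsum_compl_atTop_zero fun g => weight o g * |η g|).eventually
    (gt_mem_nhds hε)).exists
  refine ⟨s, le_of_eq_of_le ?_ hs.le⟩
  rw [norm_def]
  refine Eq.trans (tsum_congr fun g => ?_)
    (tsum_subtype {g | g ∉ s} fun g => weight o g * |η g|).symm
  by_cases hg : g ∈ s <;> simp [restrict_apply, hg]

lemma exists_abs_restrict_le {μ η : FiniteMoment G o} (hμ : ∀ g, 0 ≤ μ g)
    (hac : ∀ g, μ g = 0 → η g = 0) (s : Finset G) :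
    ∃ M, 0 ≤ M ∧ ∀ g, |η.restrict s g| ≤ M * μ g := by
  have hnonneg (g : G) : 0 ≤ |η g| / μ g := div_nonneg (abs_nonneg _) (hμ g)
  have hM0 : 0 ≤ ∑ g ∈ s, |η g| / μ g := Finset.sum_nonneg fun g _ => hnonneg g
  refine ⟨∑ g ∈ s, |η g| / μ g, hM0, fun g => ?_⟩
  by_cases hg : g ∈ s
  · obtain hμg | hμg := (hμ g).eq_or_lt
    · simp [restrict_apply, ← hμg, hac g hμg.symm]
    · simpa [restrict_apply, hg] using (div_le_iff₀ hμg).1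
        (Finset.single_le_sum (fun g _ => hnonneg g) hg)
  · simpa [restrict_apply, hg] using mul_nonneg hM0 (hμ g)

lemma exists_dominated_norm_sub_le {μ η : FiniteMoment G o} (hμ : IsProbMeasure μ)
    (hη : mass η = 0) (hac : ∀ g, μ g = 0 → η g = 0) {ε : ℝ} (hε : 0 < ε) :
    ∃ M, ∃ ζ : FiniteMoment G o, 0 ≤ M ∧ (∀ g, |ζ g| ≤ M * μ g) ∧ mass ζ = 0 ∧ ‖η - ζ‖ ≤ ε := by
  have hδ : 0 < ε / (1 + ‖μ‖) := by positivity
  obtain ⟨s, hs⟩ := η.exists_finset_norm_sub_restrict_le hδ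
  obtain ⟨M, hM0, hM⟩ := exists_abs_restrict_le hμ.1 hac s
  set m := mass (η.restrict s)
  refine ⟨M + |m|, η.restrict s - m • μ, by positivity, fun g => ?_,
    by simp [m, mass_eq_one hμ], ?_⟩
  · rw [sub_apply, smul_apply, add_mul]
    refine (abs_sub _ _).trans (add_le_add (hM g) ?_)
    rw [abs_mul, abs_of_nonneg (hμ.1 g)]
  · have hm : |m| ≤ ε / (1 + ‖μ‖) := by
      refine le_trans ?_ ((abs_mass_le_norm _).trans hs)
      rw [map_sub, hη, zero_sub, abs_neg]
    calc ‖η - (η.restrict s - m • μ)‖ = ‖(η - η.restrict s) + m • μ‖ := by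
          rw [sub_sub_eq_add_sub, add_sub_right_comm]
      _ ≤ ‖η - η.restrict s‖ + |m| * ‖μ‖ := by
          rw [← Real.norm_eq_abs, ← norm_smul]
          exact norm_add_le _ _
      _ ≤ ε / (1 + ‖μ‖) + ε / (1 + ‖μ‖) * ‖μ‖ := by gcongr
      _ = ε := by field_simp

end FiniteMoment

end DominatedDirections

section Differentiability

variable {G X : Type*} [Group G] [MetricSpace X] [MulAction G X] [IsIsometricSMul G X] {o : X}

namespace FiniteMoment

lemma eventually_dist_slope_escapeRate_le {μ η : FiniteMoment G o} {C M : ℝ}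
    (hC : ∀ᶠ κ : FiniteMoment G o in 𝓝 μ, IsProbMeasure κ → HasDeviationBound κ C)
    (hμ : IsProbMeasure μ) (hη : mass η = 0) (hM0 : 0 ≤ M) (hM : ∀ g, |η g| ≤ M * μ g) :
    ∀ᶠ t : ℝ in 𝓝[≠] 0,
      IsProbMeasure (μ + t • η : FiniteMoment G o) ∧ HasDeviationBound (μ + t • η) C ∧
      ∀ n : ℕ, 0 < n →
        dist (slope (fun s => escapeRate o (μ + s • η : FiniteMoment G o)) 0 t)
          (meanVariation μ η n) ≤ 2 * C / (n * |t|) + M * ((1 + C) * ‖η‖) * |t| * √n := by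
  have hline : Tendsto (fun t : ℝ => μ + t • η) (𝓝 0) (𝓝 μ) := by
    have : Continuous fun t : ℝ => μ + t • η := by fun_prop
    simpa using this.tendsto 0
  have hsmall : ∀ᶠ t : ℝ in 𝓝 0, |t| * M < 1 := by
    have : Continuous fun t : ℝ => |t| * M := by fun_prop
    exact this.continuousAt.eventually (gt_mem_nhds (by simp))
  filter_upwards [nhdsWithin_le_nhds (hline.eventually hC), nhdsWithin_le_nhds hsmall,
    self_mem_nhdsWithin] with t hCt ht ht0
  have hμt := isProbMeasure_add_smul hμ hη hM ht.le
  exact ⟨hμt, hCt hμt, fun n hn => dist_slope_escapeRate_meanVariation_le (hC.self_of_nhds hμ)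
    (hCt hμt) hμ hμt hη hM0 hM ht0 hn⟩

lemma cauchySeq_meanVariation {μ η : FiniteMoment G o} {C : ℝ}
    (hC : ∀ᶠ κ : FiniteMoment G o in 𝓝 μ, IsProbMeasure κ → HasDeviationBound κ C)
    (hμ : IsProbMeasure μ) (hη : mass η = 0) (hac : ∀ g, μ g = 0 → η g = 0) :
    CauchySeq (meanVariation μ η) := by
  have hCμ := hC.self_of_nhds hμ
  have hC0 := hCμ.nonneg hμ
  refine cauchySeq_of_forall_exists_dist_le fun ε hε => ?_
  obtain ⟨M, ζ, hM0, hM, hζ, hηζ⟩ := exists_dominated_norm_sub_le hμ hη hac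
    (div_pos hε (by positivity : 0 < 1 + C))
  refine ⟨meanVariation μ ζ, cauchySeq_of_dist_le_div_add_mul_sqrt (by positivity) (by positivity)
    ((eventually_dist_slope_escapeRate_le hC hμ hζ hM0 hM).mono fun t ht => ht.2.2), ?_⟩
  filter_upwards [eventually_gt_atTop 0] with n hn
  rw [Real.dist_eq, ← meanVariation_sub]
  refine (hCμ.abs_meanVariation_le hμ (by rw [map_sub, hη, hζ, sub_zero]) hn).trans ?_
  rwa [mul_comm, ← le_div_iff₀ (by positivity)]

lemma dist_slope_escapeRate_le {ν : ℝ → FiniteMoment G o} {ζ : FiniteMoment G o} {C t : ℝ}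
    (ht : t ≠ 0) (hC : HasDeviationBound (ν t) C) (hCζ : HasDeviationBound (ν 0 + t • ζ) C)
    (hν : IsProbMeasure (ν t)) (hνζ : IsProbMeasure (ν 0 + t • ζ)) :
    dist (slope (fun s => escapeRate o (ν s)) 0 t)
      (slope (fun s => escapeRate o (ν 0 + s • ζ : FiniteMoment G o)) 0 t) ≤
        (1 + C) * ‖slope ν 0 t - ζ‖ := by
  have hslope : ν t - (ν 0 + t • ζ) = t • (slope ν 0 t - ζ) := by
    rw [smul_sub, slope_def_module, sub_zero, smul_inv_smul₀ ht, sub_sub]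
  have hlipschitz := hC.abs_escapeRate_sub_le hCζ hν hνζ
  rw [hslope, norm_smul, Real.norm_eq_abs] at hlipschitz
  rw [Real.dist_eq, slope_def_field, slope_def_field, ← sub_div, sub_zero, zero_smul, add_zero,
    sub_sub_sub_cancel_right, abs_div, div_le_iff₀ (abs_pos.2 ht)]
  linarith

lemma mass_eq_zero_of_hasDerivAt {ν : ℝ → FiniteMoment G o} {η : FiniteMoment G o} {a : ℝ}
    (hν : HasDerivAt ν η a) (hprob : ∀ᶠ t in 𝓝 a, IsProbMeasure (ν t)) : mass η = 0 :=
  (mass.hasFDerivAt.comp_hasDerivAt a hν).unique <|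
    (hasDerivAt_const a 1).congr_of_eventuallyEq (hprob.mono fun _ => mass_eq_one)

theorem hasDerivAt_escapeRate (hgeo : IsGeodesicSpace X) {ν : ℝ → FiniteMoment G o}
    {η : FiniteMoment G o} (hν : HasDerivAt ν η 0) (hprob : ∀ᶠ t in 𝓝 0, IsProbMeasure (ν t))
    (hne : NonElementary o (ν 0)) (hac : ∀ g, ν 0 g = 0 → η g = 0) :
    ∃ D, Tendsto (meanVariation (ν 0) η) atTop (𝓝 D) ∧
      HasDerivAt (fun t => escapeRate o (ν t)) D 0 := by
  have hμ := hprob.self_of_nhds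
  have hη := mass_eq_zero_of_hasDerivAt hν hprob
  obtain ⟨C, hC⟩ := eventually_hasDeviationBound hgeo hμ hne
  have hCμ := hC.self_of_nhds hμ
  have hC0 := hCμ.nonneg hμ
  obtain ⟨D, hD⟩ := cauchySeq_tendsto_of_complete (cauchySeq_meanVariation hC hμ hη hac)
  refine ⟨D, hD, hasDerivAt_iff_tendsto_slope.2 ?_⟩
  refine tendsto_of_dist_le_div_add_mul_sqrt (C := 2 * C) (by positivity) hD fun ε hε => ?_
  set δ := ε / (3 * (1 + C)) with hδ
  have hδ0 : 0 < δ := by positivity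
  obtain ⟨M, ζ, hM0, hM, hζ, hηζ⟩ := exists_dominated_norm_sub_le hμ hη hac hδ0
  refine ⟨M * ((1 + C) * ‖ζ‖), ?_⟩
  filter_upwards [eventually_dist_slope_escapeRate_le hC hμ hζ hM0 hM, self_mem_nhdsWithin,
    nhdsWithin_le_nhds (hν.continuousAt.eventually hC), nhdsWithin_le_nhds hprob,
    (hasDerivAt_iff_tendsto_slope.1 hν).eventually (Metric.closedBall_mem_nhds η hδ0)]
    with t ⟨hprobζ, hCζ, hslopeζ⟩ ht hCt hprobt hslope n hn
  have hcompare : dist (slope (fun s => escapeRate o (ν s)) 0 t)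
      (slope (fun s => escapeRate o (ν 0 + s • ζ : FiniteMoment G o)) 0 t) ≤ (1 + C) * (δ + δ) := by
    refine (dist_slope_escapeRate_le ht (hCt hprobt) hCζ hprobt hprobζ).trans ?_
    gcongr
    rw [← sub_add_sub_cancel _ η]
    exact (norm_add_le _ _).trans (add_le_add (mem_closedBall_iff_norm.1 hslope) hηζ)
  have hdirection : dist (meanVariation (ν 0) ζ n) (meanVariation (ν 0) η n) ≤ (1 + C) * δ := by
    rw [dist_comm, Real.dist_eq, ← meanVariation_sub]
    refine (hCμ.abs_meanVariation_le hμ (by rw [map_sub, hη, hζ, sub_zero]) hn).trans ?_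
    gcongr
  have hε_eq : (1 + C) * (δ + δ) + (1 + C) * δ = ε := by rw [hδ]; field_simp; norm_num
  linarith [hslopeζ n hn, dist_triangle4 (slope (fun s => escapeRate o (ν s)) 0 t)
    (slope (fun s => escapeRate o (ν 0 + s • ζ : FiniteMoment G o)) 0 t)
    (meanVariation (ν 0) ζ n) (meanVariation (ν 0) η n)]

end FiniteMoment

end Differentiability

section SignedFamilies

variable {G X : Type*} [Group G] [MetricSpace X] [MulAction G X] {o : X}

lemma mem_finiteMomentSubmodule_iff {η : G → ℝ} :
    η ∈ finiteMomentSubmodule G o ↔ enorm01 o η ≠ ⊤ :=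
  ⟨fun h => h.tsum_ofReal_ne_top, fun h => (ENNReal.summable_toReal h).congr fun g =>
    ENNReal.toReal_ofReal (mul_nonneg (weight_pos o g).le (abs_nonneg _))⟩

lemma FiniteMoment.enorm01_coe (η : FiniteMoment G o) : enorm01 o η = ENNReal.ofReal ‖η‖ :=
  (ENNReal.ofReal_tsum_of_nonneg (fun g => mul_nonneg (weight_pos o g).le (abs_nonneg _))
    η.summable_weight_mul_abs).symm

lemma IsProbMeasure.mem_finiteMomentSubmodule {μ : G → ℝ} (hμ : IsProbMeasure μ)
    (hL : HasFiniteFirstMoment o μ) : μ ∈ finiteMomentSubmodule G o :=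
  (hμ.2.1.add hL).congr fun g => by
    rw [abs_of_nonneg (hμ.1 g), weight, displacement]
    ring

open scoped Classical in
lemma IsLittleO01.exists_hasDerivAt {μ η : FiniteMoment G o} {μt : ℝ → G → ℝ}
    (hlo : IsLittleO01 o fun t g => μt t g - μ g - t * η g) :
    ∃ ν : ℝ → FiniteMoment G o, (∀ᶠ t in 𝓝 0, ⇑(ν t) = μt t) ∧ ν 0 = μ ∧ HasDerivAt ν η 0 := by
  let ρ (t : ℝ) : FiniteMoment G o :=
    if h : (fun g => μt t g - μ g - t * η g) ∈ finiteMomentSubmodule G o then ⟨_, h⟩ else 0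
  have hmem {c : ℝ} (hc : 0 < c) : ∀ᶠ t in 𝓝 0,
      (∀ g, ρ t g = μt t g - μ g - t * η g) ∧ ‖ρ t‖ ≤ c * |t| := by
    obtain ⟨δ, hδ, hbound⟩ := hlo c hc
    filter_upwards [Metric.ball_mem_nhds 0 hδ] with t ht
    have hle : enorm01 o (fun g => μt t g - μ g - t * η g) ≤ ENNReal.ofReal (c * |t|) :=
      hbound t (by simpa using ht)
    have hfin := mem_finiteMomentSubmodule_iff.2 (hle.trans_lt ENNReal.ofReal_lt_top).ne
    have hρ : ρ t = ⟨_, hfin⟩ := dif_pos hfin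
    have hcoe : ⇑(ρ t) = fun g => μt t g - μ g - t * η g := by rw [hρ]; rfl
    rw [← hcoe, FiniteMoment.enorm01_coe, ENNReal.ofReal_le_ofReal_iff (by positivity)] at hle
    exact ⟨fun g => congrFun hcoe g, hle⟩
  have hρ0 : ρ 0 = 0 := by simpa using (hmem one_pos).self_of_nhds.2
  have hρ : HasDerivAt ρ 0 0 := by
    refine .of_isLittleO (Asymptotics.isLittleO_iff.2 fun c hc => ?_)
    filter_upwards [hmem hc] with t ht
    simpa [hρ0] using ht.2
  refine ⟨fun t => μ + t • η + ρ t, ?_, by simp [hρ0], ?_⟩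
  · filter_upwards [hmem one_pos] with t ht
    ext g
    simp [ht.1]
  · exact ((((hasDerivAt_id (0 : ℝ)).smul_const η).const_add μ).add hρ).congr_deriv (by simp)

end SignedFamilies

theorem escape_rate_differentiable_general
    {G X : Type*} [Group G] [MetricSpace X] [MulAction G X] [IsIsometricSMul G X]
    (o : X) (hgeo : IsGeodesicSpace X)
    (μ : G → ℝ) (hμ : IsProbMeasure μ) (hne : NonElementary o μ) (hL : HasFiniteFirstMoment o μ)
    (η : G → ℝ) (hηac : ∀ g : G, μ g = 0 → η g = 0) (hηfin : enorm01 o η ≠ ⊤)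
    (μt : ℝ → G → ℝ) (hμtprob : ∀ᶠ t in 𝓝 0, IsProbMeasure (μt t))
    (hlo : IsLittleO01 o fun t g => μt t g - μ g - t * η g) :
    ∃ D : ℝ,
      Tendsto (fun n : ℕ =>
          (1 / (n : ℝ)) * ∑ i ∈ Finset.range n,
            ∑' g : G, conv (convPow μ i) (conv η (convPow μ (n - 1 - i))) g * dist o (g • o))
        atTop (𝓝 D) ∧
      HasDerivAt (fun t : ℝ => escapeRate o (μt t)) D 0 := by
  let μ' : FiniteMoment G o := ⟨μ, hμ.mem_finiteMomentSubmodule hL⟩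
  let η' : FiniteMoment G o := ⟨η, mem_finiteMomentSubmodule_iff.2 hηfin⟩
  obtain ⟨ν, hνt, hν0, hν⟩ := IsLittleO01.exists_hasDerivAt (μ := μ') (η := η') hlo
  have hprob : ∀ᶠ t in 𝓝 0, IsProbMeasure (ν t) := by
    filter_upwards [hνt, hμtprob] with t ht hprob
    rwa [ht]
  obtain ⟨D, hD, hl⟩ := FiniteMoment.hasDerivAt_escapeRate hgeo hν hprob (by rwa [hν0])
    (by rwa [hν0])
  rw [hν0, funext (FiniteMoment.meanVariation_eq_sum_conv μ' η')] at hD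
  exact ⟨D, hD, hl.congr_of_eventuallyEq (hνt.mono fun _ ht => congrArg (escapeRate o) ht.symm)⟩

/-- Differentiability of the escape rate (Theorem 1.3). -/
theorem escape_rate_differentiable
    {G X : Type*} [Group G] [Countable G] [MetricSpace X] [MulAction G X]
    (o : X) (hgeo : IsGeodesicSpace X)
    (hiso : ∀ g : G, Isometry fun x : X => g • x)
    (hind : HasIndepContracting G o)
    (μ : G → ℝ) (hμ : IsProbMeasure μ) (hne : NonElementary o μ)
    (hL : HasFiniteFirstMoment o μ)
    (η : G → ℝ) (hηac : ∀ g : G, μ g = 0 → η g = 0)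
    (hηfin : enorm01 o η ≠ ⊤)
    (μt : ℝ → G → ℝ) (hμtprob : ∀ t ∈ Set.Icc (-1 : ℝ) 1, IsProbMeasure (μt t))
    (hlo : IsLittleO01 o fun t g => μt t g - μ g - t * η g) :
    ∃ D : ℝ,
      Filter.Tendsto (fun n : ℕ =>
          (1 / (n : ℝ)) * ∑ i ∈ Finset.range n,
            ∑' g : G, conv (convPow μ i) (conv η (convPow μ (n - 1 - i))) g * dist o (g • o))
        Filter.atTop (𝓝 D) ∧
      HasDerivAt (fun t : ℝ => escapeRate o (μt t)) D 0 := by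
  have : IsIsometricSMul G X := ⟨hiso⟩
  exact escape_rate_differentiable_general o hgeo μ hμ hne hL η hηac hηfin μt
    (Filter.mem_of_superset (Icc_mem_nhds (by norm_num) (by norm_num)) hμtprob) hlo
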